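/- arXiv:2109.05768 — 5 statements merged into one kernel-verified Lean document; each statement's English description precedes it below -/
import Mathlib

section
/- An inner product ⟨·,·⟩ on Sym(n) is O(n)-invariant (i.e. ⟨RXRᵀ, RYRᵀ⟩ = ⟨X,Y⟩ for all R ∈ O(n) and X,Y ∈ Sym(n)) if and only if there exist real numbers α, β with α > 0 and α + nβ > 0 such that ⟨X,X⟩ = α·tr(X²) + β·tr(X)² for all X ∈ Sym(n). -/
open Matrix Finset

/-!
Conjugating by permutation matrices shows that the restriction of an invariant form to diagonal
matrices is a permutation-invariant bilinear form. As permutations act transitively on pairs of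
distinct indices, its Gram matrix has one value on the diagonal and one value off it, so the form
is `a ∑ dᵢ² + b (∑ dᵢ)²` at `diagonal d`. The spectral theorem transports this formula to all
matrices. Evaluating at `eᵢ - eⱼ` and at `(1, …, 1)` yields the two positivity conditions; the
coefficients are not unique when there is at most one index, and have to be chosen again there.
Conversely, traces are invariant under conjugation, and polarization recovers the form from its
diagonal values. The spectral theorem being the only analytic input, the argument covers real
symmetric and complex Hermitian matrices alike.
-/

section PermutationInvariant

variable {ι : Type*}

theorem exists_eq_ite_of_perm_invariant [DecidableEq ι] {α : Type*} [Nonempty α] {f : ι → ι → α}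
    (hf : ∀ (σ : Equiv.Perm ι) i j, f (σ i) (σ j) = f i j) :
    ∃ a b, ∀ i j, f i j = if i = j then a else b := by
  rcases isEmpty_or_nonempty ι with _ | ⟨⟨k⟩⟩
  · exact ⟨Classical.arbitrary α, Classical.arbitrary α, isEmptyElim⟩
  have diag (i : ι) : f i i = f k k := by
    simpa using hf (Equiv.swap k i) k k
  rcases subsingleton_or_nontrivial ι with _ | _
  · exact ⟨f k k, f k k, fun i j => by rw [Subsingleton.elim j i, diag, ite_self]⟩
  obtain ⟨l, hl⟩ := exists_ne k
  refine ⟨f k k, f l k, fun i j => ?_⟩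
  split_ifs with hij
  · rw [← hij, diag]
  · have two_transitive : MulAction.IsMultiplyPretransitive (Equiv.Perm ι) ι 2 :=
      Equiv.Perm.isMultiplyPretransitive ι 2
    obtain ⟨σ, rfl, rfl⟩ := MulAction.is_two_pretransitive_iff.mp two_transitive hl hij
    exact hf σ l k

theorem exists_bilinForm_eq_dotProduct_add_of_perm_invariant [Fintype ι] {R : Type*} [CommRing R]
    {D : LinearMap.BilinForm R (ι → R)}
    (hD : ∀ (σ : Equiv.Perm ι) d e, D (d ∘ σ) (e ∘ σ) = D d e) :
    ∃ a b, ∀ d e, D d e = a * (d ⬝ᵥ e) + b * ((∑ i, d i) * ∑ i, e i) := by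
  classical
  have gram_invariant (σ : Equiv.Perm ι) (i j : ι) :
      D (Pi.single (σ i) 1) (Pi.single (σ j) 1) = D (Pi.single i 1) (Pi.single j 1) := by
    have single_comp (k : ι) : (Pi.single (σ k) 1 : ι → R) ∘ σ = Pi.single k 1 := by
      ext l
      simp [Pi.single_apply]
    rw [← hD σ, single_comp, single_comp]
  obtain ⟨p, b, gram⟩ := exists_eq_ite_of_perm_invariant
    (f := fun i j => D (Pi.single i 1) (Pi.single j 1)) gram_invariant
  have gram_eq : LinearMap.BilinForm.toMatrix' D = (p - b) • 1 + b • vecMulVec 1 1 := by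
    ext i j
    by_cases hij : i = j <;> simp [LinearMap.BilinForm.toMatrix'_apply, gram, hij]
  refine ⟨p - b, b, fun d e => ?_⟩
  rw [← Matrix.toBilin'_toMatrix' D, gram_eq, Matrix.toBilin'_apply']
  simp only [add_mulVec, smul_mulVec, one_mulVec, vecMulVec_mulVec, dotProduct_add, dotProduct_smul,
    dotProduct_one, one_dotProduct, op_smul_eq_smul, smul_eq_mul, mul_comm]

end PermutationInvariant

theorem exists_pos_coeff_of_dotProduct_add_posDef {ι K : Type*} [Fintype ι] [CommRing K]
    [LinearOrder K] [IsStrictOrderedRing K] {a b : K}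
    (hpos : ∀ d : ι → K, d ≠ 0 → 0 < a * (d ⬝ᵥ d) + b * (∑ i, d i) ^ 2) :
    ∃ α β : K, 0 < α ∧ 0 < α + Fintype.card ι * β ∧
      ∀ d : ι → K, a * (d ⬝ᵥ d) + b * (∑ i, d i) ^ 2 = α * (d ⬝ᵥ d) + β * (∑ i, d i) ^ 2 := by
  classical
  rcases isEmpty_or_nonempty ι with _ | _
  · exact ⟨1, 0, by simp, by simp, fun d => by simp⟩
  have card_cast_pos : (0 : K) < Fintype.card ι := by exact_mod_cast Fintype.card_pos
  have add_card_mul_pos : 0 < a + Fintype.card ι * b := by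
    have at_one : 0 < Fintype.card ι * (a + Fintype.card ι * b) := by
      convert hpos 1 one_ne_zero using 1
      simp only [dotProduct_one, Pi.one_apply, sum_const, card_univ, nsmul_eq_mul, mul_one]
      ring
    exact pos_of_mul_pos_right at_one card_cast_pos.le
  rcases subsingleton_or_nontrivial ι with _ | _
  · obtain ⟨_⟩ := nonempty_unique ι
    refine ⟨a + b, 0, by simpa using add_card_mul_pos, by simpa using add_card_mul_pos, fun d => ?_⟩
    simp only [dotProduct, univ_unique, sum_singleton]
    ring
  · obtain ⟨i, j, hij⟩ := exists_pair_ne ι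
    have at_sub := hpos (Pi.single i 1 - Pi.single j 1) fun h => by
      simpa [hij] using congrFun h i
    refine ⟨a, b, ?_, add_card_mul_pos, fun d => rfl⟩
    have sub_dotProduct_sub : (Pi.single i 1 - Pi.single j 1 : ι → K) ⬝ᵥ
        (Pi.single i 1 - Pi.single j 1) = 2 := by
      simp [dotProduct_sub, hij, hij.symm, one_add_one_eq_two]
    have sum_sub : ∑ k, (Pi.single i 1 - Pi.single j 1 : ι → K) k = 0 := by
      simp
    rw [sub_dotProduct_sub, sum_sub] at at_sub
    linarith

section UnitaryInvariant

variable {R A : Type*} [CommRing R] [StarRing R] [TrivialStar R] [Ring A] [StarRing A]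
  [Algebra R A] [StarModule R A]

variable (R) in
/-- The action `x ↦ a * x * star a` of an element `a` of a star algebra on the self-adjoint part. -/
@[simps]
def selfAdjointConj (a : A) : selfAdjoint A →ₗ[R] selfAdjoint A where
  toFun x := ⟨a * x * star a, x.2.conjugate a⟩
  map_add' x y := Subtype.ext <| by simp [mul_add, add_mul]
  map_smul' c x := Subtype.ext <| by simp

/-- Invariance of a bilinear form on the self-adjoint part of a star algebra under conjugation by
unitary elements. For real matrices this is `O(n)`-invariance of a form on `Sym(n)`. -/
def IsUnitaryInvariant (B : LinearMap.BilinForm R (selfAdjoint A)) : Prop :=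
  ∀ u ∈ unitary A, ∀ x y, B (selfAdjointConj R u x) (selfAdjointConj R u y) = B x y

theorem isUnitaryInvariant_of_apply_self {K : Type*} [Field K] [NeZero (2 : K)] [StarRing K]
    [TrivialStar K] [Algebra K A] [StarModule K A]
    {B : LinearMap.BilinForm K (selfAdjoint A)} (hB : B.IsSymm)
    (h : ∀ u ∈ unitary A, ∀ x, B (selfAdjointConj K u x) (selfAdjointConj K u x) = B x x) :
    IsUnitaryInvariant B := by
  intro u hu x y
  have comp_eq : B.comp (selfAdjointConj K u) (selfAdjointConj K u) = B :=
    LinearMap.BilinForm.ext_of_isSymm ⟨fun x y => hB.eq _ _⟩ hB (h u hu)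
  exact LinearMap.congr_fun₂ comp_eq x y

end UnitaryInvariant

section UnitaryMatrix

variable {ι R : Type*} [Fintype ι] [DecidableEq ι] [CommRing R] [StarRing R]

theorem trace_unitary_conj {U : Matrix ι ι R} (hU : U ∈ unitary (Matrix ι ι R))
    (X : Matrix ι ι R) : (U * X * star U).trace = X.trace := by
  rw [trace_mul_cycle, Unitary.star_mul_self_of_mem hU, one_mul]

theorem permMatrix_mem_unitary (σ : Equiv.Perm ι) :
    σ.permMatrix R ∈ unitary (Matrix ι ι R) := by
  rw [← unitaryGroup, mem_unitaryGroup_iff, star_eq_conjTranspose, conjTranspose_permMatrix,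
    ← permMatrix_mul, inv_mul_cancel, permMatrix_one]

end UnitaryMatrix

section HermitianMatrix

variable {ι 𝕜 : Type*} [DecidableEq ι] [RCLike 𝕜]

variable (𝕜) in
/-- The real diagonal matrices inside the real vector space of Hermitian matrices. -/
@[simps]
def realDiagonal : (ι → ℝ) →ₗ[ℝ] selfAdjoint (Matrix ι ι 𝕜) where
  toFun d := ⟨diagonal fun i => (d i : 𝕜), by
    simp [selfAdjoint.mem_iff, star_eq_conjTranspose, diagonal_conjTranspose, Pi.star_def]⟩
  map_add' d e := Subtype.ext <| by simp
  map_smul' c d := Subtype.ext <| by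
    ext i j
    by_cases hij : i = j <;> simp [hij, Algebra.smul_def]

theorem realDiagonal_injective : Function.Injective (realDiagonal 𝕜 : (ι → ℝ) →ₗ[ℝ] _) := by
  intro d e hde
  have coe_eq := diagonal_injective (congrArg Subtype.val hde)
  exact funext fun i => RCLike.ofReal_injective (congrFun coe_eq i)

variable [Fintype ι]

/-- The function `α tr(X²) + β tr(X)²`; on Hermitian matrices both traces are real, so that taking
real parts loses nothing. -/
def traceQuadratic (α β : ℝ) (X : Matrix ι ι 𝕜) : ℝ :=
  α * RCLike.re (X * X).trace + β * RCLike.re X.trace ^ 2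

theorem traceQuadratic_unitary_conj (α β : ℝ) {U : Matrix ι ι 𝕜}
    (hU : U ∈ unitary (Matrix ι ι 𝕜)) (X : Matrix ι ι 𝕜) :
    traceQuadratic α β (U * X * star U) = traceQuadratic α β X := by
  have conj_mul_conj : U * X * star U * (U * X * star U) = U * (X * X) * star U := by
    simpa using (map_mul (Unitary.conjStarAlgAut 𝕜 (Matrix ι ι 𝕜) ⟨U, hU⟩) X X).symm
  rw [traceQuadratic, conj_mul_conj, trace_unitary_conj hU, trace_unitary_conj hU, traceQuadratic]

theorem traceQuadratic_realDiagonal (α β : ℝ) (d : ι → ℝ) :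
    traceQuadratic α β (realDiagonal 𝕜 d : Matrix ι ι 𝕜) =
      α * (d ⬝ᵥ d) + β * (∑ i, d i) ^ 2 := by
  simp [traceQuadratic, dotProduct]

theorem selfAdjointConj_permMatrix_realDiagonal (σ : Equiv.Perm ι) (d : ι → ℝ) :
    selfAdjointConj ℝ (σ.permMatrix 𝕜) (realDiagonal 𝕜 d) = realDiagonal 𝕜 (d ∘ σ) := by
  ext i j
  simp [star_eq_conjTranspose, PEquiv.toMatrix_toPEquiv_mul, PEquiv.mul_toMatrix_toPEquiv,
    diagonal_apply, ← Equiv.Perm.inv_def]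

theorem exists_unitary_conj_realDiagonal_eq (X : selfAdjoint (Matrix ι ι 𝕜)) :
    ∃ U ∈ unitary (Matrix ι ι 𝕜), ∃ d : ι → ℝ, selfAdjointConj ℝ U (realDiagonal 𝕜 d) = X :=
  have hX : (X : Matrix ι ι 𝕜).IsHermitian := X.2
  ⟨hX.eigenvectorUnitary, hX.eigenvectorUnitary.2, hX.eigenvalues,
    Subtype.ext hX.spectral_theorem.symm⟩

variable {B : LinearMap.BilinForm ℝ (selfAdjoint (Matrix ι ι 𝕜))}

theorem isUnitaryInvariant_of_apply_self_eq_traceQuadratic (hB : B.IsSymm) {α β : ℝ}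
    (h : ∀ X, B X X = traceQuadratic α β (X : Matrix ι ι 𝕜)) : IsUnitaryInvariant B :=
  isUnitaryInvariant_of_apply_self hB fun U hU X => by
    rw [h, h, selfAdjointConj_apply_coe, traceQuadratic_unitary_conj α β hU]

theorem apply_self_eq_traceQuadratic_of_realDiagonal (hB : IsUnitaryInvariant B) {α β : ℝ}
    (h : ∀ d, B (realDiagonal 𝕜 d) (realDiagonal 𝕜 d) =
      traceQuadratic α β (realDiagonal 𝕜 d : Matrix ι ι 𝕜)) (X : selfAdjoint (Matrix ι ι 𝕜)) :
    B X X = traceQuadratic α β (X : Matrix ι ι 𝕜) := by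
  obtain ⟨U, hU, d, rfl⟩ := exists_unitary_conj_realDiagonal_eq X
  rw [hB U hU, h, selfAdjointConj_apply_coe, traceQuadratic_unitary_conj α β hU]

theorem exists_apply_realDiagonal_eq_of_isUnitaryInvariant (hB : IsUnitaryInvariant B) :
    ∃ a b : ℝ, ∀ d e, B (realDiagonal 𝕜 d) (realDiagonal 𝕜 e) =
      a * (d ⬝ᵥ e) + b * ((∑ i, d i) * ∑ i, e i) :=
  exists_bilinForm_eq_dotProduct_add_of_perm_invariant
    (D := B.comp (realDiagonal 𝕜) (realDiagonal 𝕜)) fun σ d e => by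
      simp only [LinearMap.BilinForm.comp_apply, ← selfAdjointConj_permMatrix_realDiagonal]
      exact hB _ (permMatrix_mem_unitary σ) _ _

theorem o_n_invariant_inner_products_characterization_general
    (hsymm : B.IsSymm) (hpos : ∀ X, X ≠ 0 → 0 < B X X) :
    IsUnitaryInvariant B ↔ ∃ α β : ℝ, 0 < α ∧ 0 < α + Fintype.card ι * β ∧
      ∀ X, B X X = traceQuadratic α β (X : Matrix ι ι 𝕜) := by
  refine ⟨fun hinv => ?_, fun ⟨α, β, _, _, h⟩ =>
    isUnitaryInvariant_of_apply_self_eq_traceQuadratic hsymm h⟩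
  obtain ⟨a, b, hab⟩ := exists_apply_realDiagonal_eq_of_isUnitaryInvariant hinv
  have diag_pos (d : ι → ℝ) (hd : d ≠ 0) : 0 < a * (d ⬝ᵥ d) + b * (∑ i, d i) ^ 2 := by
    rw [sq, ← hab]
    exact hpos _ ((map_ne_zero_iff _ realDiagonal_injective).mpr hd)
  obtain ⟨α, β, hα, hαβ, coeff_eq⟩ := exists_pos_coeff_of_dotProduct_add_posDef diag_pos
  refine ⟨α, β, hα, hαβ, apply_self_eq_traceQuadratic_of_realDiagonal hinv fun d => ?_⟩
  rw [hab, ← sq, coeff_eq, traceQuadratic_realDiagonal]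

end HermitianMatrix

section SymmetricMatrix

variable {ι R : Type*} [CommRing R] [StarRing R] [TrivialStar R]

theorem mem_selfAdjoint_iff_isSymm {X : Matrix ι ι R} :
    X ∈ selfAdjoint (Matrix ι ι R) ↔ X.IsSymm :=
  isHermitian_iff_isSymm

theorem isSymm_coe_selfAdjoint (X : selfAdjoint (Matrix ι ι R)) : (X : Matrix ι ι R).IsSymm :=
  mem_selfAdjoint_iff_isSymm.mp X.2

variable (ip : Matrix ι ι R → Matrix ι ι R → R)
  (h_symm : ∀ X Y, X.IsSymm → Y.IsSymm → ip X Y = ip Y X)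
  (h_add : ∀ X Y Z, X.IsSymm → Y.IsSymm → Z.IsSymm → ip (X + Y) Z = ip X Z + ip Y Z)
  (h_smul : ∀ (c : R) (X Y : Matrix ι ι R), X.IsSymm → Y.IsSymm → ip (c • X) Y = c * ip X Y)

/-- The bilinear form on symmetric matrices given by a function on all matrices that is symmetric
and bilinear on symmetric ones. Symmetric matrices are encoded as the self-adjoint matrices over a
ring with trivial star. -/
def symmMatrixBilinForm : LinearMap.BilinForm R (selfAdjoint (Matrix ι ι R)) :=
  have comm (X Y : selfAdjoint (Matrix ι ι R)) : ip X Y = ip Y X :=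
    h_symm X Y (isSymm_coe_selfAdjoint X) (isSymm_coe_selfAdjoint Y)
  have add_left (X Y Z : selfAdjoint (Matrix ι ι R)) : ip ↑(X + Y) Z = ip X Z + ip Y Z :=
    h_add X Y Z (isSymm_coe_selfAdjoint X) (isSymm_coe_selfAdjoint Y) (isSymm_coe_selfAdjoint Z)
  have smul_left (c : R) (X Y : selfAdjoint (Matrix ι ι R)) : ip ↑(c • X) Y = c • ip X Y :=
    h_smul c X Y (isSymm_coe_selfAdjoint X) (isSymm_coe_selfAdjoint Y)
  LinearMap.mk₂ R (fun X Y => ip X Y) add_left smul_left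
    (fun X Y Z => by rw [comm, add_left, comm Y, comm Z])
    (fun c X Y => by rw [comm, smul_left, comm Y])

@[simp]
theorem symmMatrixBilinForm_apply (X Y : selfAdjoint (Matrix ι ι R)) :
    symmMatrixBilinForm ip h_symm h_add h_smul X Y = ip X Y :=
  rfl

theorem isSymm_symmMatrixBilinForm : (symmMatrixBilinForm ip h_symm h_add h_smul).IsSymm :=
  ⟨fun X Y => h_symm X Y (isSymm_coe_selfAdjoint X) (isSymm_coe_selfAdjoint Y)⟩

theorem isUnitaryInvariant_symmMatrixBilinForm_iff [Fintype ι] [DecidableEq ι] :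
    IsUnitaryInvariant (symmMatrixBilinForm ip h_symm h_add h_smul) ↔
      ∀ Q : Matrix ι ι R, Q * Qᵀ = 1 →
        ∀ X Y, X.IsSymm → Y.IsSymm → ip (Q * X * Qᵀ) (Q * Y * Qᵀ) = ip X Y := by
  have star_eq_transpose (Q : Matrix ι ι R) : star Q = Qᵀ := by
    rw [star_eq_conjTranspose, conjTranspose_eq_transpose_of_trivial]
  refine forall_congr' fun Q => imp_congr ?_ ⟨fun h X Y hX hY => ?_, fun h X Y => ?_⟩
  · rw [← unitaryGroup, mem_unitaryGroup_iff, star_eq_transpose]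
  · simpa [star_eq_transpose] using
      h ⟨X, mem_selfAdjoint_iff_isSymm.mpr hX⟩ ⟨Y, mem_selfAdjoint_iff_isSymm.mpr hY⟩
  · simpa [star_eq_transpose] using h X Y (isSymm_coe_selfAdjoint X) (isSymm_coe_selfAdjoint Y)

end SymmetricMatrix

/-- An inner product on `Sym(n)` is `O(n)`-invariant iff it is of the form
`⟨X,X⟩ = α·tr(X²) + β·tr(X)²` with `α > 0` and `α + nβ > 0`. -/
theorem o_n_invariant_inner_products_characterization (n : ℕ)
    (ip : Matrix (Fin n) (Fin n) ℝ → Matrix (Fin n) (Fin n) ℝ → ℝ)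
    (h_symm : ∀ X Y, X.IsSymm → Y.IsSymm → ip X Y = ip Y X)
    (h_add : ∀ X Y Z, X.IsSymm → Y.IsSymm → Z.IsSymm → ip (X + Y) Z = ip X Z + ip Y Z)
    (h_smul : ∀ (c : ℝ) (X Y : Matrix (Fin n) (Fin n) ℝ), X.IsSymm → Y.IsSymm →
      ip (c • X) Y = c * ip X Y)
    (h_pos : ∀ X, X.IsSymm → X ≠ 0 → 0 < ip X X) :
    (∀ R : Matrix (Fin n) (Fin n) ℝ, R * Rᵀ = 1 →
      ∀ X Y, X.IsSymm → Y.IsSymm → ip (R * X * Rᵀ) (R * Y * Rᵀ) = ip X Y) ↔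
    (∃ α β : ℝ, 0 < α ∧ 0 < α + n * β ∧
      ∀ X : Matrix (Fin n) (Fin n) ℝ, X.IsSymm →
        ip X X = α * (X * X).trace + β * X.trace ^ 2) := by
  simpa [← isUnitaryInvariant_symmMatrixBilinForm_iff ip h_symm h_add h_smul, traceQuadratic,
      mem_selfAdjoint_iff_isSymm] using
    o_n_invariant_inner_products_characterization_general
      (isSymm_symmMatrixBilinForm ip h_symm h_add h_smul)
      fun X hX => h_pos X (isSymm_coe_selfAdjoint X) (by simpa using hX)
end

section
/- An inner product ⟨·,·⟩ on Sym(n) is invariant under the group D±(n) of diagonal matrices with diagonal entries in {−1,+1} (i.e. ⟨εXε, εYε⟩ = ⟨X,Y⟩ for every such diagonal sign matrix ε and all X,Y ∈ Sym(n)) if and only if there exist n(n−1)/2 positive real numbers α_{ij} = α_{ji} > 0 for i ≠ j and a matrix S ∈ SPD(n) such that for all X ∈ Sym(n): ⟨X,X⟩ = Σ_{i≠j} α_{ij} X_{ij}² + Σ_{i,j} S_{ij} X_{ii} X_{jj}. -/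
open Matrix Finset

/-!
Write `Fᵢⱼ = Eᵢⱼ + Eⱼᵢ`, and let `ρᵢ` be conjugation by the sign matrix whose only negative entry is
the `i`-th. For `i ≠ j`, `Fᵢⱼ` is a `-1`-eigenvector of both `ρᵢ` and `ρⱼ`, while
`(1 - ρⱼ)(1 - ρᵢ) X = 4 Xᵢⱼ Fᵢⱼ` for every symmetric `X`. Invariance of `⟨·,·⟩` therefore gives
`4 ⟨Fᵢⱼ, X⟩ = ⟨Fᵢⱼ, (1 - ρⱼ)(1 - ρᵢ) X⟩ = 4 Xᵢⱼ ⟨Fᵢⱼ, Fᵢⱼ⟩`, so the `Fᵢⱼ` are orthogonal to each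
other and to the diagonal matrices. Expanding `X = diag X + ½ ∑_{i ≠ j} Xᵢⱼ Fᵢⱼ` yields the formula
with `αᵢⱼ = ½ ⟨Fᵢⱼ, Fᵢⱼ⟩` and `S` the Gram matrix of the `Eᵢᵢ`. Conversely, the formula is visibly
unchanged by sign conjugations, and a symmetric bilinear form is determined by its quadratic form.
-/

/-- The space `Sym(ι)` of symmetric matrices, as a submodule of all square matrices. -/
def symmetricMatrices (ι R : Type*) [Semiring R] : Submodule R (Matrix ι ι R) where
  carrier := {X | X.IsSymm}
  add_mem' := IsSymm.add
  zero_mem' := isSymm_zero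
  smul_mem' c _ hX := hX.smul c

namespace symmetricMatrices

section Semiring

variable {ι R : Type*} [Semiring R] [DecidableEq ι]

/-- The inclusion of the diagonal matrices into the symmetric matrices. -/
def ofDiagonal : (ι → R) →ₗ[R] symmetricMatrices ι R :=
  (diagonalLinearMap ι R R).codRestrict _ isSymm_diagonal

@[simp]
theorem coe_ofDiagonal (d : ι → R) : (ofDiagonal d : Matrix ι ι R) = diagonal d :=
  rfl

theorem ofDiagonal_injective :
    Function.Injective (ofDiagonal : (ι → R) →ₗ[R] symmetricMatrices ι R) :=
  fun _ _ h => Matrix.diagonal_injective (congrArg Subtype.val h)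

/-- The symmetrized matrix unit `Fᵢⱼ = Eᵢⱼ + Eⱼᵢ`; in particular `Fᵢᵢ = 2 Eᵢᵢ`. -/
def symmUnit (i j : ι) : symmetricMatrices ι R :=
  ⟨single i j 1 + single j i 1, transpose_single i j (1 : R) ▸ isSymm_add_transpose_self _⟩

theorem symmUnit_apply (i j k l : ι) :
    (symmUnit i j : symmetricMatrices ι R).1 k l = single i j 1 k l + single j i 1 k l :=
  rfl

theorem symmUnit_comm (i j : ι) : (symmUnit i j : symmetricMatrices ι R) = symmUnit j i :=
  Subtype.ext (add_comm _ _)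

theorem symmUnit_ne_zero [Nontrivial R] {i j : ι} (hij : i ≠ j) :
    (symmUnit i j : symmetricMatrices ι R) ≠ 0 := by
  intro h
  have entry : (symmUnit i j : symmetricMatrices ι R).1 i j = 0 := by rw [h]; rfl
  simp [symmUnit_apply, hij.symm] at entry

theorem coe_sum_smul_symmUnit [Fintype ι] (C : Matrix ι ι R) :
    ((∑ i, ∑ j, C i j • symmUnit i j : symmetricMatrices ι R) : Matrix ι ι R) = C + Cᵀ := by
  have sum_eq : C = ∑ i, ∑ j, C i j • single i j (1 : R) := by
    simpa only [smul_single, smul_eq_mul, mul_one] using matrix_eq_sum_single C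
  have sum_transpose_eq : Cᵀ = ∑ i, ∑ j, C i j • single j i (1 : R) := by
    conv_lhs => rw [sum_eq]
    simp only [transpose_sum, transpose_smul, transpose_single]
  simp only [Submodule.coe_sum, Submodule.coe_smul, symmUnit, smul_add, sum_add_distrib]
  rw [← sum_eq, ← sum_transpose_eq]

end Semiring

section Ring

variable {ι R : Type*} [Ring R] [DecidableEq ι]

/-- The sign vector whose only negative entry is the `i`-th. -/
def signFlip (i : ι) : ι → R :=
  Function.update 1 i (-1)

theorem signFlip_eq_one_or_neg_one (i k : ι) :
    (signFlip i k : R) = 1 ∨ (signFlip i k : R) = -1 := by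
  rcases eq_or_ne k i with rfl | hk
  · simp [signFlip]
  · simp [signFlip, hk]

end Ring

section CommRing

variable {ι R : Type*} [CommRing R] [Fintype ι] [DecidableEq ι]

/-- Conjugation `X ↦ diag(d) X diag(d)`, as an endomorphism of the symmetric matrices. -/
def diagonalConj (d : ι → R) : symmetricMatrices ι R →ₗ[R] symmetricMatrices ι R :=
  (LinearMap.mulRight R (diagonal d) ∘ₗ LinearMap.mulLeft R (diagonal d)).restrict
    fun X (hX : X.IsSymm) => show (diagonal d * X * diagonal d).IsSymm by
      simp only [IsSymm, transpose_mul, diagonal_transpose, hX.eq, Matrix.mul_assoc]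

theorem coe_diagonalConj (d : ι → R) (X : symmetricMatrices ι R) :
    (diagonalConj d X : Matrix ι ι R) = diagonal d * X * diagonal d :=
  rfl

theorem diagonalConj_apply (d : ι → R) (X : symmetricMatrices ι R) (i j : ι) :
    (diagonalConj d X).1 i j = d i * X.1 i j * d j := by
  rw [coe_diagonalConj, mul_diagonal, diagonal_mul]

theorem diagonalConj_symmUnit (d : ι → R) (i j : ι) :
    diagonalConj d (symmUnit i j) = (d i * d j) • symmUnit i j := by
  ext k l
  simp only [diagonalConj_apply, symmUnit_apply, Submodule.coe_smul, Matrix.smul_apply,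
    single_apply, smul_eq_mul]
  grind

/-- `1 - ρᵢ` doubles the off-diagonal entries in row and column `i` and kills all the others, so
only the entries `(i, j)` and `(j, i)` survive both factors. -/
theorem sub_diagonalConj_signFlip_sub {i j : ι} (hij : i ≠ j) (X : symmetricMatrices ι R) :
    (X - diagonalConj (signFlip i) X) -
        diagonalConj (signFlip j) (X - diagonalConj (signFlip i) X) =
      (4 * X.1 i j) • symmUnit i j := by
  have entry_symm : X.1 j i = X.1 i j := IsSymm.apply X.2 i j
  ext k l
  simp only [Submodule.coe_sub, Matrix.sub_apply, diagonalConj_apply, symmUnit_apply,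
    Submodule.coe_smul, Matrix.smul_apply, single_apply, smul_eq_mul, signFlip,
    Function.update_apply, Pi.one_apply]
  grind

variable {B : LinearMap.BilinForm R (symmetricMatrices ι R)}

/-- Invariance of a bilinear form on symmetric matrices under conjugation by all diagonal sign
matrices. -/
def IsSignInvariant (B : LinearMap.BilinForm R (symmetricMatrices ι R)) : Prop :=
  ∀ e : ι → R, (∀ i, e i = 1 ∨ e i = -1) →
    ∀ X Y, B (diagonalConj e X) (diagonalConj e Y) = B X Y

/-- The quadratic function `∑_{i ≠ j} aᵢⱼ Xᵢⱼ² + ∑_{i,j} Sᵢⱼ Xᵢᵢ Xⱼⱼ`, in which the off-diagonal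
entries of `X` are decoupled from each other and from the diagonal. -/
def decoupledQuadratic (a : ι → ι → R) (S X : Matrix ι ι R) : R :=
  (∑ i, ∑ j, if i = j then 0 else a i j * X i j ^ 2) + ∑ i, ∑ j, S i j * X i i * X j j

theorem decoupledQuadratic_diagonalConj (a : ι → ι → R) (S : Matrix ι ι R) {e : ι → R}
    (he : ∀ i, e i ^ 2 = 1) (X : symmetricMatrices ι R) :
    decoupledQuadratic a S (diagonalConj e X) = decoupledQuadratic a S X := by
  have sq_entry (i j : ι) : (e i * X.1 i j * e j) ^ 2 = X.1 i j ^ 2 := by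
    rw [mul_pow, mul_pow, he, he, one_mul, mul_one]
  have diag_entry (i : ι) : e i * X.1 i i * e i = X.1 i i := by
    rw [mul_right_comm, ← sq, he, one_mul]
  simp only [decoupledQuadratic, diagonalConj_apply, sq_entry, diag_entry]

theorem IsSignInvariant.apply_symmUnit_sub_diagonalConj (h : IsSignInvariant B) {i j : ι}
    (hij : i ≠ j) (X : symmetricMatrices ι R) :
    B (symmUnit i j) (X - diagonalConj (signFlip i) X) = 2 * B (symmUnit i j) X := by
  have sign_mul : (signFlip i i * signFlip i j : R) = -1 := by simp [signFlip, hij.symm]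
  have invariance := h (signFlip i) (signFlip_eq_one_or_neg_one i) (symmUnit i j) X
  rw [diagonalConj_symmUnit, sign_mul, map_smul, LinearMap.smul_apply, smul_eq_mul] at invariance
  rw [map_sub]
  linear_combination invariance

/-- The matrix `S` of the theorem: the Gram matrix of the matrix units `Eᵢᵢ`. -/
noncomputable def diagonalGram (B : LinearMap.BilinForm R (symmetricMatrices ι R)) :
    Matrix ι ι R :=
  (B.comp ofDiagonal ofDiagonal).toMatrix (Pi.basisFun R ι)

theorem apply_ofDiagonal_self (B : LinearMap.BilinForm R (symmetricMatrices ι R)) (x : ι → R) :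
    B (ofDiagonal x) (ofDiagonal x) = ∑ i, ∑ j, diagonalGram B i j * x i * x j := by
  calc B (ofDiagonal x) (ofDiagonal x)
      = toBilin' (diagonalGram B) x x := by
        rw [diagonalGram, LinearMap.BilinForm.toMatrix_basisFun, toBilin'_toMatrix',
          LinearMap.BilinForm.comp_apply]
    _ = ∑ i, ∑ j, diagonalGram B i j * x i * x j := by
        simp only [toBilin'_apply, mul_comm (x _)]

theorem posDef_diagonalGram [PartialOrder R] [StarRing R] [TrivialStar R] (hB : B.IsSymm)
    (hpos : B.toQuadraticMap.PosDef) : (diagonalGram B).PosDef := by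
  have comp_symm : (B.comp ofDiagonal ofDiagonal).IsSymm :=
    ⟨fun x y => hB.eq (ofDiagonal x) (ofDiagonal y)⟩
  refine (LinearMap.BilinForm.posDef_toQuadraticMap_iff_matrix _ _ comp_symm).mp fun x hx => ?_
  exact hpos _ (ofDiagonal_injective.ne hx |>.trans_eq (map_zero _))

end CommRing

section Field

variable {ι K : Type*} [Field K] [NeZero (2 : K)] [Fintype ι] [DecidableEq ι]
  {B : LinearMap.BilinForm K (symmetricMatrices ι K)}

theorem isSignInvariant_of_apply_self (hB : B.IsSymm) {a : ι → ι → K} {S : Matrix ι ι K}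
    (h : ∀ X, B X X = decoupledQuadratic a S X) : IsSignInvariant B := by
  intro e he
  have he_sq (i : ι) : e i ^ 2 = 1 := sq_eq_one_iff.mpr (he i)
  have conj_symm : (B.comp (diagonalConj e) (diagonalConj e)).IsSymm :=
    ⟨fun X Y => hB.eq (diagonalConj e X) (diagonalConj e Y)⟩
  have comp_eq : B.comp (diagonalConj e) (diagonalConj e) = B :=
    LinearMap.BilinForm.ext_of_isSymm conj_symm hB fun X => by
      rw [LinearMap.BilinForm.comp_apply, h, h, decoupledQuadratic_diagonalConj a S he_sq]
  exact fun X Y => LinearMap.congr_fun₂ comp_eq X Y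

theorem IsSignInvariant.apply_symmUnit (h : IsSignInvariant B) {i j : ι} (hij : i ≠ j)
    (X : symmetricMatrices ι K) :
    B (symmUnit i j) X = X.1 i j * B (symmUnit i j) (symmUnit i j) := by
  have two_ne : (2 : K) ≠ 0 := two_ne_zero
  have flip_j := h.apply_symmUnit_sub_diagonalConj hij.symm (X - diagonalConj (signFlip i) X)
  rw [symmUnit_comm, sub_diagonalConj_signFlip_sub hij,
    h.apply_symmUnit_sub_diagonalConj hij, map_smul, smul_eq_mul] at flip_j
  apply mul_left_cancel₀ (mul_ne_zero two_ne two_ne)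
  linear_combination -flip_j

theorem eq_ofDiagonal_add_sum_symmUnit (X : symmetricMatrices ι K) :
    X = ofDiagonal (diag X.1) + ∑ i, ∑ j, if i = j then 0 else (X.1 i j / 2) • symmUnit i j := by
  have entry_symm (i j : ι) : X.1 j i = X.1 i j := IsSymm.apply X.2 i j
  have expansion := coe_sum_smul_symmUnit (of fun i j => if i = j then 0 else X.1 i j / 2)
  simp only [of_apply, ite_smul, zero_smul] at expansion
  ext i j
  rw [Submodule.coe_add, expansion]
  rcases eq_or_ne i j with rfl | hij
  · simp
  · simp [hij, hij.symm, entry_symm i j]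

theorem IsSignInvariant.apply_eq_apply_ofDiagonal_add_sum (h : IsSignInvariant B)
    (X Y : symmetricMatrices ι K) :
    B X Y = B (ofDiagonal (diag X.1)) Y + ∑ i, ∑ j, if i = j then 0 else
      B (symmUnit i j) (symmUnit i j) / 2 * X.1 i j * Y.1 i j := by
  conv_lhs => rw [eq_ofDiagonal_add_sum_symmUnit X]
  simp only [map_add, map_sum, LinearMap.add_apply, LinearMap.sum_apply, add_right_inj]
  refine sum_congr rfl fun i _ => sum_congr rfl fun j _ => ?_
  split_ifs with hij
  · simp
  · rw [map_smul, LinearMap.smul_apply, h.apply_symmUnit hij, smul_eq_mul]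
    ring

theorem IsSignInvariant.apply_self (h : IsSignInvariant B) (hB : B.IsSymm)
    (X : symmetricMatrices ι K) :
    B X X = decoupledQuadratic (fun i j => B (symmUnit i j) (symmUnit i j) / 2)
      (diagonalGram B) X := by
  have diagonal_orthogonal :
      B X (ofDiagonal (diag X.1)) = B (ofDiagonal (diag X.1)) (ofDiagonal (diag X.1)) := by
    rw [h.apply_eq_apply_ofDiagonal_add_sum, add_eq_left]
    refine sum_eq_zero fun i _ => sum_eq_zero fun j _ => ?_
    split_ifs with hij
    · rfl
    · rw [coe_ofDiagonal, diagonal_apply_ne _ hij, mul_zero]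
  rw [h.apply_eq_apply_ofDiagonal_add_sum, hB.eq, diagonal_orthogonal, apply_ofDiagonal_self,
    add_comm, decoupledQuadratic]
  simp only [mul_assoc, sq, diag_apply]

end Field

section OfFunction

variable {ι R : Type*} [CommRing R] {ip : Matrix ι ι R → Matrix ι ι R → R}
  (h_symm : ∀ X Y, X.IsSymm → Y.IsSymm → ip X Y = ip Y X)
  (h_add : ∀ X Y Z, X.IsSymm → Y.IsSymm → Z.IsSymm → ip (X + Y) Z = ip X Z + ip Y Z)
  (h_smul : ∀ (c : R) (X Y : Matrix ι ι R), X.IsSymm → Y.IsSymm → ip (c • X) Y = c * ip X Y)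

/-- The bilinear form on `Sym(ι)` given by a function on all matrices that is symmetric and linear
on symmetric matrices, and arbitrary elsewhere. -/
def bilinFormOfFunction : LinearMap.BilinForm R (symmetricMatrices ι R) :=
  LinearMap.mk₂ R (fun X Y => ip X Y)
    (fun X Y Z => h_add X Y Z X.2 Y.2 Z.2)
    (fun c X Y => h_smul c X Y X.2 Y.2)
    (fun X Y Z => by
      rw [h_symm X (Y + Z : symmetricMatrices ι R) X.2 (Y + Z).2, h_symm X Y X.2 Y.2,
        h_symm X Z X.2 Z.2]
      exact h_add Y Z X Y.2 Z.2 X.2)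
    (fun c X Y => by
      rw [h_symm X (c • Y : symmetricMatrices ι R) X.2 (c • Y).2, h_symm X Y X.2 Y.2]
      exact h_smul c Y X Y.2 X.2)

theorem isSignInvariant_bilinFormOfFunction [Fintype ι] [DecidableEq ι] :
    IsSignInvariant (bilinFormOfFunction h_symm h_add h_smul) ↔
      ∀ e : ι → R, (∀ i, e i = 1 ∨ e i = -1) → ∀ X Y : Matrix ι ι R, X.IsSymm → Y.IsSymm →
        ip (diagonal e * X * diagonal e) (diagonal e * Y * diagonal e) = ip X Y :=
  ⟨fun h e he X Y hX hY => h e he ⟨X, hX⟩ ⟨Y, hY⟩, fun h e he X Y => h e he X Y X.2 Y.2⟩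

end OfFunction

end symmetricMatrices

open symmetricMatrices in
theorem sign_diagonal_invariant_inner_products_general {ι K : Type*} [Fintype ι] [DecidableEq ι]
    [Field K] [LinearOrder K] [IsStrictOrderedRing K] [StarRing K] [TrivialStar K]
    (B : LinearMap.BilinForm K (symmetricMatrices ι K)) (hB : B.IsSymm)
    (hpos : B.toQuadraticMap.PosDef) :
    IsSignInvariant B ↔
      ∃ (a : ι → ι → K) (S : Matrix ι ι K),
        (∀ i j, a i j = a j i) ∧ (∀ i j, i ≠ j → 0 < a i j) ∧ S.PosDef ∧
          ∀ X : symmetricMatrices ι K, B X X = decoupledQuadratic a S X := by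
  constructor
  · intro h
    refine ⟨fun i j => B (symmUnit i j) (symmUnit i j) / 2, diagonalGram B, fun i j => ?_,
      fun i j hij => ?_, posDef_diagonalGram hB hpos, h.apply_self hB⟩
    · simp only [symmUnit_comm i j]
    · exact half_pos (hpos _ (symmUnit_ne_zero hij))
  · rintro ⟨a, S, -, -, -, h⟩
    exact isSignInvariant_of_apply_self hB h

/-- An inner product on `Sym(n)` is invariant under conjugation by diagonal sign
matrices iff it has the form `⟨X,X⟩ = Σ_{i≠j} α_{ij} X_{ij}² + Σ_{i,j} S_{ij} X_{ii}X_{jj}`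
with `α_{ij} = α_{ji} > 0` for `i ≠ j` and `S ∈ SPD(n)`. -/
theorem sign_diagonal_invariant_inner_products (n : ℕ)
    (ip : Matrix (Fin n) (Fin n) ℝ → Matrix (Fin n) (Fin n) ℝ → ℝ)
    (h_symm : ∀ X Y, X.IsSymm → Y.IsSymm → ip X Y = ip Y X)
    (h_add : ∀ X Y Z, X.IsSymm → Y.IsSymm → Z.IsSymm → ip (X + Y) Z = ip X Z + ip Y Z)
    (h_smul : ∀ (c : ℝ) (X Y : Matrix (Fin n) (Fin n) ℝ), X.IsSymm → Y.IsSymm →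
      ip (c • X) Y = c * ip X Y)
    (h_pos : ∀ X, X.IsSymm → X ≠ 0 → 0 < ip X X) :
    (∀ e : Fin n → ℝ, (∀ i, e i = 1 ∨ e i = -1) →
      ∀ X Y : Matrix (Fin n) (Fin n) ℝ, X.IsSymm → Y.IsSymm →
        ip (Matrix.diagonal e * X * Matrix.diagonal e)
           (Matrix.diagonal e * Y * Matrix.diagonal e) = ip X Y) ↔
    (∃ (a : Fin n → Fin n → ℝ) (S : Matrix (Fin n) (Fin n) ℝ),
      (∀ i j, a i j = a j i) ∧ (∀ i j, i ≠ j → 0 < a i j) ∧ S.PosDef ∧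
      ∀ X : Matrix (Fin n) (Fin n) ℝ, X.IsSymm →
        ip X X = (∑ i, ∑ j, if i = j then 0 else a i j * X i j ^ 2) +
          ∑ i, ∑ j, S i j * X i i * X j j) := by
  have classification := sign_diagonal_invariant_inner_products_general
    (symmetricMatrices.bilinFormOfFunction h_symm h_add h_smul)
    ⟨fun X Y => h_symm X Y X.2 Y.2⟩ fun X hX => h_pos X X.2 (Subtype.coe_ne_coe.mpr hX)
  rw [symmetricMatrices.isSignInvariant_bilinFormOfFunction] at classification
  simp only [Subtype.forall] at classification
  exact classification
end

section
/- Let φ : (0,∞)² → (0,∞) be a symmetric function, ψ = φ^{−1/2}, and let D = diag(d₁,…,d_n) be a positive diagonal matrix. Define Ψ_D : Sym(n) → Sym(n) by [Ψ_D(X)]_{ij} = ψ(d_i,d_j)·X_{ij}. Let α, β ∈ ℝ with α > 0 and α + nβ > 0, and define the extended kernel quadratic form g_D(X,X) = α·tr(Ψ_D(X)²) + β·tr(Ψ_D(X))² on Sym(n). Then the dual (cometric) quadratic form under the Frobenius identification — namely ω ↦ tr(ω X'(ω)) where X'(ω) is the unique element of Sym(n) with g_D(X, X'(ω)) = tr(ωX)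 for all X ∈ Sym(n) — equals the extended kernel quadratic form associated to (1/φ, 1/α, −β/(α(α+nβ))): that is, tr(ω X'(ω)) = (1/α)·tr(Ψ*_D(ω)²) − (β/(α(α+nβ)))·tr(Ψ*_D(ω))², where [Ψ*_D(ω)]_{ij} = ω_{ij}/ψ(d_i,d_j). -/
open Matrix Finset

/-!
The trace pairing is nondegenerate on symmetric matrices, and the extended kernel form is
represented in it by the operator `X ↦ k ⊙ L (k ⊙ X)`, where `k i j = ψ (d i) (d j)`, the product
`⊙` is entrywise and `L Z = α Z + β tr(Z) 1`. Operators of the shape of `L` are closed under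
composition, and solving for the coefficients shows that the inverse of `L` has coefficients
`1 / α` and `-β / (α (α + n β))`. Hence the inverse of the representing operator is the
representing operator of the extended kernel form attached to the entrywise inverse of `k` and
these dual coefficients; this form is therefore the cometric.
-/

theorem isSymm_hadamard {ι R : Type*} [Mul R] {A B : Matrix ι ι R} (hA : A.IsSymm)
    (hB : B.IsSymm) : (A ⊙ B).IsSymm := by
  rw [IsSymm, transpose_hadamard, hA.eq, hB.eq]

theorem hadamard_hadamard_map_inv {m n G₀ : Type*} [GroupWithZero G₀] {k : Matrix m n G₀}
    (hk : ∀ i j, k i j ≠ 0) (X : Matrix m n G₀) : k ⊙ (k.map (·⁻¹) ⊙ X) = X := by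
  ext i j
  exact mul_inv_cancel_left₀ (hk i j) _

theorem hadamard_map_inv_hadamard {m n G₀ : Type*} [GroupWithZero G₀] {k : Matrix m n G₀}
    (hk : ∀ i j, k i j ≠ 0) (X : Matrix m n G₀) : k.map (·⁻¹) ⊙ (k ⊙ X) = X := by
  ext i j
  exact inv_mul_cancel_left₀ (hk i j) _

theorem trace_hadamard_mul {m n R : Type*} [Fintype m] [Fintype n] [CommSemiring R]
    (k A : Matrix m n R) (B : Matrix n m R) : ((k ⊙ A) * B).trace = (A * (kᵀ ⊙ B)).trace := by
  simp only [trace, diag_apply, mul_apply, hadamard_apply, transpose_apply]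
  refine sum_congr rfl fun i _ => sum_congr rfl fun j _ => ?_
  ring

section CommSemiring

variable {ι R : Type*} [Fintype ι] [CommSemiring R]

theorem trace_mul_add_transpose {A : Matrix ι ι R} (hA : A.IsSymm) (X : Matrix ι ι R) :
    (A * (X + Xᵀ)).trace = 2 * (A * X).trace := by
  have transpose_term : (A * Xᵀ).trace = (A * X).trace := by
    rw [← trace_transpose_mul, transpose_transpose, hA.eq]
  rw [Matrix.mul_add, trace_add, transpose_term, two_mul]

theorem eq_of_forall_isSymm_trace_mul_eq [IsCancelMulZero R] [NeZero (2 : R)]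
    {A B : Matrix ι ι R} (hA : A.IsSymm) (hB : B.IsSymm)
    (h : ∀ X : Matrix ι ι R, X.IsSymm → (A * X).trace = (B * X).trace) : A = B := by
  refine ext_iff_trace_mul_right.2 fun X => mul_left_cancel₀ (two_ne_zero (α := R)) ?_
  rw [← trace_mul_add_transpose hA, ← trace_mul_add_transpose hB]
  exact h _ (isSymm_add_transpose_self X)

/-- The extended kernel bilinear form with weights `k` and coefficients `α`, `β`. The kernel
enters only through the matrix of its values, `k i j = ψ (d i) (d j)`, so that `Ψ_D X = k ⊙ X`. -/
def extendedKernelForm (k : Matrix ι ι R) (α β : R) (X Y : Matrix ι ι R) : R :=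
  α * ((k ⊙ X) * (k ⊙ Y)).trace + β * (k ⊙ X).trace * (k ⊙ Y).trace

variable [DecidableEq ι]

/-- The conjugation-equivariant operator `Z ↦ α Z + β tr(Z) 1`, which represents the extended
kernel form of the constant kernel `1` in the trace pairing. -/
def isotropicMap (α β : R) (Z : Matrix ι ι R) : Matrix ι ι R :=
  α • Z + (β * Z.trace) • (1 : Matrix ι ι R)

/-- The operator representing `extendedKernelForm k α β` in the trace pairing, i.e. the lowering
of indices by this form; see `extendedKernelForm_eq_trace`. -/
def extendedKernelFlat (k : Matrix ι ι R) (α β : R) (X : Matrix ι ι R) : Matrix ι ι R :=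
  k ⊙ isotropicMap α β (k ⊙ X)

theorem isotropicMap_one_zero (Z : Matrix ι ι R) : isotropicMap 1 0 Z = Z := by
  simp [isotropicMap]

theorem trace_isotropicMap (α β : R) (Z : Matrix ι ι R) :
    (isotropicMap α β Z).trace = (α + Fintype.card ι * β) * Z.trace := by
  simp only [isotropicMap, trace_add, trace_smul, trace_one, smul_eq_mul]
  ring

theorem isotropicMap_isotropicMap (a b α β : R) (Z : Matrix ι ι R) :
    isotropicMap a b (isotropicMap α β Z) =
      isotropicMap (a * α) (a * β + b * (α + Fintype.card ι * β)) Z := by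
  rw [isotropicMap, trace_isotropicMap]
  simp only [isotropicMap]
  module

theorem isotropicMap_comm (a b α β : R) (Z : Matrix ι ι R) :
    isotropicMap a b (isotropicMap α β Z) = isotropicMap α β (isotropicMap a b Z) := by
  rw [isotropicMap_isotropicMap, isotropicMap_isotropicMap]
  congr 1 <;> ring

theorem trace_mul_isotropicMap (α β : R) (Z W : Matrix ι ι R) :
    (Z * isotropicMap α β W).trace = α * (Z * W).trace + β * Z.trace * W.trace := by
  simp only [isotropicMap, Matrix.mul_add, Matrix.mul_smul, Matrix.mul_one, trace_add, trace_smul,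
    smul_eq_mul]
  ring

theorem isSymm_isotropicMap (α β : R) {Z : Matrix ι ι R} (hZ : Z.IsSymm) :
    (isotropicMap α β Z).IsSymm :=
  (hZ.smul _).add (isSymm_one.smul _)

theorem isSymm_extendedKernelFlat {k : Matrix ι ι R} (hk : k.IsSymm) (α β : R)
    {X : Matrix ι ι R} (hX : X.IsSymm) : (extendedKernelFlat k α β X).IsSymm :=
  isSymm_hadamard hk (isSymm_isotropicMap α β (isSymm_hadamard hk hX))

theorem extendedKernelForm_eq_trace {k : Matrix ι ι R} (hk : k.IsSymm) (α β : R)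
    (X Y : Matrix ι ι R) :
    extendedKernelForm k α β X Y = (extendedKernelFlat k α β Y * X).trace := by
  rw [trace_mul_comm, extendedKernelFlat, extendedKernelForm, ← trace_mul_isotropicMap,
    trace_hadamard_mul, hk.eq]

theorem forall_isSymm_extendedKernelForm_eq_trace_iff [IsCancelMulZero R] [NeZero (2 : R)]
    {k : Matrix ι ι R} (hk : k.IsSymm) (α β : R) {ω Y : Matrix ι ι R}
    (hω : ω.IsSymm) (hY : Y.IsSymm) :
    (∀ X : Matrix ι ι R, X.IsSymm → extendedKernelForm k α β X Y = (ω * X).trace) ↔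
      extendedKernelFlat k α β Y = ω := by
  simp only [extendedKernelForm_eq_trace hk]
  refine ⟨eq_of_forall_isSymm_trace_mul_eq (isSymm_extendedKernelFlat hk α β hY) hω, ?_⟩
  rintro rfl X -
  rfl

end CommSemiring

section Field

variable {ι K : Type*} [Fintype ι] [DecidableEq ι] [Field K]

theorem isotropicMap_dual_left {α β : K} (hα : α ≠ 0) (hαβ : α + Fintype.card ι * β ≠ 0)
    (Z : Matrix ι ι K) :
    isotropicMap α⁻¹ (-(β / (α * (α + Fintype.card ι * β)))) (isotropicMap α β Z) = Z := by
  have trace_coeff : α⁻¹ * β +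
      -(β / (α * (α + Fintype.card ι * β))) * (α + Fintype.card ι * β) = 0 := by
    rw [neg_mul, ← div_div, div_mul_cancel₀ _ hαβ, div_eq_inv_mul, add_neg_cancel]
  rw [isotropicMap_isotropicMap, inv_mul_cancel₀ hα, trace_coeff, isotropicMap_one_zero]

theorem isotropicMap_dual_right {α β : K} (hα : α ≠ 0) (hαβ : α + Fintype.card ι * β ≠ 0)
    (Z : Matrix ι ι K) :
    isotropicMap α β (isotropicMap α⁻¹ (-(β / (α * (α + Fintype.card ι * β)))) Z) = Z := by
  rw [isotropicMap_comm, isotropicMap_dual_left hα hαβ]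

theorem extendedKernelFlat_dual_right {k : Matrix ι ι K} (hk : ∀ i j, k i j ≠ 0) {α β : K}
    (hα : α ≠ 0) (hαβ : α + Fintype.card ι * β ≠ 0) (ω : Matrix ι ι K) :
    extendedKernelFlat k α β (extendedKernelFlat (k.map (·⁻¹)) α⁻¹
      (-(β / (α * (α + Fintype.card ι * β)))) ω) = ω := by
  rw [extendedKernelFlat, extendedKernelFlat, hadamard_hadamard_map_inv hk,
    isotropicMap_dual_right hα hαβ, hadamard_hadamard_map_inv hk]

theorem extendedKernelFlat_dual_left {k : Matrix ι ι K} (hk : ∀ i j, k i j ≠ 0) {α β : K}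
    (hα : α ≠ 0) (hαβ : α + Fintype.card ι * β ≠ 0) (X : Matrix ι ι K) :
    extendedKernelFlat (k.map (·⁻¹)) α⁻¹ (-(β / (α * (α + Fintype.card ι * β))))
      (extendedKernelFlat k α β X) = X := by
  rw [extendedKernelFlat, extendedKernelFlat, hadamard_map_inv_hadamard hk,
    isotropicMap_dual_left hα hαβ, hadamard_map_inv_hadamard hk]

end Field

theorem extended_kernel_metric_cometric_general {ι K : Type*} [Fintype ι] [Field K]
    [NeZero (2 : K)] {k : Matrix ι ι K} (hk : k.IsSymm) (hk₀ : ∀ i j, k i j ≠ 0)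
    {α β : K} (hα : α ≠ 0) (hαβ : α + Fintype.card ι * β ≠ 0) {ω : Matrix ι ι K} (hω : ω.IsSymm) :
    ∃ X' : Matrix ι ι K, X'.IsSymm ∧
      (∀ X : Matrix ι ι K, X.IsSymm → extendedKernelForm k α β X X' = (ω * X).trace) ∧
      (∀ Y : Matrix ι ι K, Y.IsSymm →
        (∀ X : Matrix ι ι K, X.IsSymm → extendedKernelForm k α β X Y = (ω * X).trace) →
          Y = X') ∧
      (ω * X').trace = extendedKernelForm (k.map (·⁻¹)) α⁻¹
        (-(β / (α * (α + Fintype.card ι * β)))) ω ω := by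
  classical
  have hk' : (k.map (·⁻¹)).IsSymm := hk.map _
  have hX' := isSymm_extendedKernelFlat hk' α⁻¹ (-(β / (α * (α + Fintype.card ι * β)))) hω
  refine ⟨_, hX', ?existence, fun Y hY hYω => ?uniqueness, ?value⟩
  case existence =>
    exact (forall_isSymm_extendedKernelForm_eq_trace_iff hk α β hω hX').2
      (extendedKernelFlat_dual_right hk₀ hα hαβ ω)
  case uniqueness =>
    rw [← (forall_isSymm_extendedKernelForm_eq_trace_iff hk α β hω hY).1 hYω,
      extendedKernelFlat_dual_left hk₀ hα hαβ]
  case value =>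
    rw [extendedKernelForm_eq_trace hk', trace_mul_comm]

/-- cometric of an extended kernel metric. With `ψ = φ^{−1/2}`,
`g_D(X,Y) = α tr(Ψ_D(X)Ψ_D(Y)) + β tr(Ψ_D(X)) tr(Ψ_D(Y))`, `α > 0`, `α + nβ > 0`, the Riesz
representative `X'` of `X ↦ tr(ωX)` exists, is unique among symmetric matrices, and the dual
quadratic form is the extended kernel form associated to `(1/φ, 1/α, −β/(α(α+nβ)))`. -/
theorem extended_kernel_metric_cometric (n : ℕ) (φ : ℝ → ℝ → ℝ)
    (hφs : ∀ x y : ℝ, 0 < x → 0 < y → φ x y = φ y x)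
    (hφp : ∀ x y : ℝ, 0 < x → 0 < y → 0 < φ x y)
    (ψ : ℝ → ℝ → ℝ) (hψ : ∀ x y : ℝ, 0 < x → 0 < y → ψ x y = (Real.sqrt (φ x y))⁻¹)
    (d : Fin n → ℝ) (hd : ∀ i, 0 < d i)
    (α β : ℝ) (hα : 0 < α) (hαβ : 0 < α + n * β)
    (Ψ : Matrix (Fin n) (Fin n) ℝ → Matrix (Fin n) (Fin n) ℝ)
    (hΨ : ∀ X, Ψ X = Matrix.of fun i j => ψ (d i) (d j) * X i j)
    (Ψs : Matrix (Fin n) (Fin n) ℝ → Matrix (Fin n) (Fin n) ℝ)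
    (hΨs : ∀ ω, Ψs ω = Matrix.of fun i j => ω i j / ψ (d i) (d j))
    (g : Matrix (Fin n) (Fin n) ℝ → Matrix (Fin n) (Fin n) ℝ → ℝ)
    (hg : ∀ X Y, g X Y = α * (Ψ X * Ψ Y).trace + β * (Ψ X).trace * (Ψ Y).trace)
    (ω : Matrix (Fin n) (Fin n) ℝ) (hω : ω.IsSymm) :
    ∃ X' : Matrix (Fin n) (Fin n) ℝ, X'.IsSymm ∧
      (∀ X : Matrix (Fin n) (Fin n) ℝ, X.IsSymm → g X X' = (ω * X).trace) ∧
      (∀ Y : Matrix (Fin n) (Fin n) ℝ, Y.IsSymm →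
        (∀ X : Matrix (Fin n) (Fin n) ℝ, X.IsSymm → g X Y = (ω * X).trace) → Y = X') ∧
      (ω * X').trace = (1 / α) * (Ψs ω * Ψs ω).trace
        - (β / (α * (α + n * β))) * (Ψs ω).trace ^ 2 := by
  obtain ⟨k, hk⟩ : ∃ k : Matrix (Fin n) (Fin n) ℝ, ∀ i j, k i j = ψ (d i) (d j) :=
    ⟨of fun i j => ψ (d i) (d j), fun _ _ => rfl⟩
  have k_symm : k.IsSymm := IsSymm.ext fun i j => by
    rw [hk, hk, hψ _ _ (hd j) (hd i), hψ _ _ (hd i) (hd j), hφs _ _ (hd i) (hd j)]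
  have k_ne_zero (i j : Fin n) : k i j ≠ 0 := by
    rw [hk, hψ _ _ (hd i) (hd j)]
    exact inv_ne_zero (Real.sqrt_ne_zero'.2 (hφp _ _ (hd i) (hd j)))
  have Ψ_eq (X) : Ψ X = k ⊙ X := by
    ext i j
    rw [hΨ, of_apply, hadamard_apply, hk]
  have Ψs_eq (X) : Ψs X = k.map (·⁻¹) ⊙ X := by
    ext i j
    rw [hΨs, of_apply, hadamard_apply, map_apply, hk, div_eq_inv_mul]
  have g_eq (X Y) : g X Y = extendedKernelForm k α β X Y := by
    rw [hg, Ψ_eq, Ψ_eq, extendedKernelForm]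
  have cometric_eq : 1 / α * (Ψs ω * Ψs ω).trace - β / (α * (α + n * β)) * (Ψs ω).trace ^ 2 =
      extendedKernelForm (k.map (·⁻¹)) α⁻¹ (-(β / (α * (α + n * β)))) ω ω := by
    rw [Ψs_eq, extendedKernelForm]
    ring
  simpa only [g_eq, cometric_eq, Fintype.card_fin] using
    extended_kernel_metric_cometric_general k_symm k_ne_zero hα.ne'
      (by simpa only [Fintype.card_fin] using hαβ.ne') hω
end

section
/- Let (g_Σ)_{Σ ∈ SPD(n)} be an O(n)-invariant family of inner products on Sym(n), i.e. g_{RΣRᵀ}(RXRᵀ, RXRᵀ) = g_Σ(X,X) for all Σ ∈ SPD(n), X ∈ Sym(n) and R ∈ O(n). Then there exist functions γ, α : (0,∞)ⁿ → (0,∞) and β : (0,∞)ⁿ → ℝ such that for every positive diagonal matrix D = diag(d₁,…,d_n) and every X ∈ Sym(n): g_D(X,X) = Σ_i γ(d_i, d_{k≠i}) X_{ii}² + Σ_{i≠j} α(d_i, d_j, d_{k≠i,j}) X_{ij}² + Σ_{i≠j} β(d_i, d_j, d_{k≠i,j}) X_{ii} X_{jj}, where moreover: (Compatibility) γ = α +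 β on the set {d ∈ (0,∞)ⁿ : d₁ = d₂}; (Positivity) for all d ∈ (0,∞)ⁿ, the symmetric matrix S(d) with S_{ii}(d) = γ(d_i, d_{k≠i}) and S_{ij}(d) = β(d_i, d_j, d_{k≠i,j}) for i ≠ j is positive definite; (Symmetry) γ is (1,n−1)-symmetric and α, β are (2,n−2)-symmetric. -/
open Matrix Finset

/-- A vector in `ℝⁿ` is positive if all its entries are. -/
def PosVec {n : ℕ} (d : Fin n → ℝ) : Prop := ∀ i, 0 < d i

/-- The vector `(d_i, d_{k≠i})`: entries of `d` reordered so that `d i` comes first, the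
remaining entries being the `d k` for `k ≠ i` (in some order). -/
def reord1 {n : ℕ} (hn : 2 ≤ n) (d : Fin n → ℝ) (i : Fin n) : Fin n → ℝ :=
  d ∘ (Equiv.swap (⟨0, by omega⟩ : Fin n) i)

/-- A permutation sending `0 ↦ i` and `1 ↦ j` (for `i ≠ j`). -/
def perm2 {n : ℕ} (hn : 2 ≤ n) (i j : Fin n) : Equiv.Perm (Fin n) :=
  Equiv.swap (⟨0, by omega⟩ : Fin n) i *
    Equiv.swap (⟨1, by omega⟩ : Fin n) (Equiv.swap (⟨0, by omega⟩ : Fin n) i j)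

/-- The vector `(d_i, d_j, d_{k≠i,j})`: entries of `d` reordered so that `d i, d j` come first,
the remaining entries being the `d k` for `k ≠ i,j` (in some order). -/
def reord2 {n : ℕ} (hn : 2 ≤ n) (d : Fin n → ℝ) (i j : Fin n) : Fin n → ℝ :=
  d ∘ (perm2 hn i j)

/-- `f` is `(1,n−1)`-symmetric: invariant under all permutations of its last `n−1` variables. -/
def Sym1n {n : ℕ} (hn : 2 ≤ n) (f : (Fin n → ℝ) → ℝ) : Prop :=
  ∀ σ : Equiv.Perm (Fin n), σ ⟨0, by omega⟩ = (⟨0, by omega⟩ : Fin n) →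
    ∀ d : Fin n → ℝ, PosVec d → f (d ∘ σ) = f d

/-- `f` is `(2,n−2)`-symmetric: invariant under all permutations of its first `2` variables and
of its last `n−2` variables. -/
def Sym2n {n : ℕ} (hn : 2 ≤ n) (f : (Fin n → ℝ) → ℝ) : Prop :=
  ∀ σ : Equiv.Perm (Fin n),
    ((σ ⟨0, by omega⟩ = (⟨0, by omega⟩ : Fin n) ∧ σ ⟨1, by omega⟩ = (⟨1, by omega⟩ : Fin n)) ∨
     (σ ⟨0, by omega⟩ = (⟨1, by omega⟩ : Fin n) ∧ σ ⟨1, by omega⟩ = (⟨0, by omega⟩ : Fin n))) →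
    ∀ d : Fin n → ℝ, PosVec d → f (d ∘ σ) = f d

/-- The symmetric matrix `S(d)` with `S_{ii}(d) = γ(d_i, d_{k≠i})` and
`S_{ij}(d) = β(d_i, d_j, d_{k≠i,j})` for `i ≠ j`. -/
def Smat {n : ℕ} (hn : 2 ≤ n) (γ β : (Fin n → ℝ) → ℝ) (d : Fin n → ℝ) :
    Matrix (Fin n) (Fin n) ℝ :=
  Matrix.of fun i j => if i = j then γ (reord1 hn d i) else β (reord2 hn d i j)

/-- The compatibility condition: `γ = α + β` on `{d : d₁ = d₂}`. -/
def CompatCond {n : ℕ} (hn : 2 ≤ n) (γ α β : (Fin n → ℝ) → ℝ) : Prop :=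
  ∀ d : Fin n → ℝ, PosVec d → d ⟨0, by omega⟩ = d ⟨1, by omega⟩ → γ d = α d + β d

/-- The positivity condition: `S(d)` is positive definite for every positive `d`. -/
def PositivityCond {n : ℕ} (hn : 2 ≤ n) (γ β : (Fin n → ℝ) → ℝ) : Prop :=
  ∀ d : Fin n → ℝ, PosVec d → (Smat hn γ β d).PosDef

/-- The bilinear form
`g_D(X,Y) = Σ_i γ(d_i,d_{k≠i}) X_{ii}Y_{ii} + Σ_{i≠j} α(d_i,d_j,d_{k≠i,j}) X_{ij}Y_{ij}
 + Σ_{i≠j} β(d_i,d_j,d_{k≠i,j}) X_{ii}Y_{jj}` at the positive diagonal matrix `D = diag d`. -/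
def gD {n : ℕ} (hn : 2 ≤ n) (γ α β : (Fin n → ℝ) → ℝ) (d : Fin n → ℝ)
    (X Y : Matrix (Fin n) (Fin n) ℝ) : ℝ :=
  (∑ i, γ (reord1 hn d i) * X i i * Y i i) +
  (∑ i, ∑ j, if i = j then 0 else α (reord2 hn d i j) * X i j * Y i j) +
  (∑ i, ∑ j, if i = j then 0 else β (reord2 hn d i j) * X i i * Y j j)

/-- Frobenius norm of a real matrix. -/
noncomputable def frobNorm {n : ℕ} (A : Matrix (Fin n) (Fin n) ℝ) : ℝ :=
  Real.sqrt (∑ i, ∑ j, (A i j) ^ 2)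

/-! At a diagonal point, invariance under conjugation by diagonal sign matrices kills every inner
product of elementary symmetric matrices, except those of two diagonal ones and that of an
off-diagonal one with itself. Permutation matrices move the surviving coefficients to the first
positions, which gives the three functions and their symmetries. When two entries of `d` coincide,
a reflection in their coordinate plane also fixes the diagonal point; it mixes diagonal with
off-diagonal directions and thereby forces the compatibility relation. -/

section Conjugation

variable {ι K : Type*} [DecidableEq ι]

lemma single_submatrix_perm [Zero K] (σ : Equiv.Perm ι) (i j : ι) (a : K) :
    (single (σ i) (σ j) a).submatrix σ σ = single i j a := by
  ext k l
  simp [single_apply]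

lemma vecMulVec_single_single [MulZeroClass K] (i j : ι) (a b : K) :
    vecMulVec (Pi.single i a) (Pi.single j b) = single i j (a * b) := by
  ext k l
  simp only [vecMulVec_apply, Pi.single_apply, single_apply]
  grind [mul_zero, zero_mul]

variable [Fintype ι]

lemma diagonal_mul_single_mul_diagonal [CommSemiring K] (s t : ι → K) (i j : ι) (a : K) :
    diagonal s * single i j a * diagonal t = (s i * t j) • single i j a := by
  ext k l
  simp only [mul_diagonal, diagonal_mul, single_apply, Matrix.smul_apply, smul_eq_mul]
  split_ifs with h
  · rw [h.1, h.2, mul_right_comm]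
  · simp

lemma permMatrix_mul_mul_transpose [NonAssocSemiring K] (σ : Equiv.Perm ι) (A : Matrix ι ι K) :
    σ.permMatrix K * A * (σ.permMatrix K)ᵀ = A.submatrix σ σ := by
  rw [Equiv.Perm.permMatrix, ← PEquiv.toMatrix_symm, PEquiv.toMatrix_toPEquiv_mul,
    ← Equiv.toPEquiv_symm, PEquiv.mul_toMatrix_toPEquiv]
  simp

lemma permMatrix_mul_transpose [NonAssocSemiring K] (σ : Equiv.Perm ι) :
    σ.permMatrix K * (σ.permMatrix K)ᵀ = 1 := by
  simpa using permMatrix_mul_mul_transpose σ (1 : Matrix ι ι K)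

end Conjugation

section Householder

variable {ι K : Type*} [Fintype ι] [DecidableEq ι] [Field K]

/-- The matrix of the Householder reflection in the hyperplane orthogonal to `v`, used as a source
of orthogonal matrices with rational entries. It is the identity if `v ⬝ᵥ v = 0`. -/
def householder (v : ι → K) : Matrix ι ι K :=
  1 - (2 / (v ⬝ᵥ v)) • vecMulVec v v

lemma transpose_householder (v : ι → K) : (householder v)ᵀ = householder v := by
  simp [householder, transpose_vecMulVec]

lemma householder_mulVec (v w : ι → K) :
    householder v *ᵥ w = w - (2 / (v ⬝ᵥ v) * (v ⬝ᵥ w)) • v := by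
  simp [householder, sub_mulVec, smul_mulVec, vecMulVec_mulVec, smul_smul]

lemma householder_mul_transpose {v : ι → K} (hv : v ⬝ᵥ v ≠ 0) :
    householder v * (householder v)ᵀ = 1 := by
  have hsq : vecMulVec v v * vecMulVec v v = (v ⬝ᵥ v) • vecMulVec v v := by
    rw [vecMulVec_mul_vecMulVec, vecMulVec_smul]
  rw [transpose_householder, householder, sub_mul, one_mul, mul_sub, mul_one, smul_mul_smul_comm,
    hsq, smul_smul]
  match_scalars
  · ring
  · field_simp
    ring

lemma commute_householder {v : ι → K} {A : Matrix ι ι K} {c : K}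
    (hleft : A *ᵥ v = c • v) (hright : v ᵥ* A = c • v) : Commute A (householder v) := by
  refine (Commute.one_right A).sub_right (Commute.smul_right ?_ _)
  rw [Commute, SemiconjBy, mul_vecMulVec, vecMulVec_mul, hleft, hright, smul_vecMulVec,
    vecMulVec_smul]

lemma householder_mul_single_mul_transpose (v : ι → K) (i j : ι) :
    householder v * single i j 1 * (householder v)ᵀ =
      vecMulVec (householder v *ᵥ Pi.single i 1) (householder v *ᵥ Pi.single j 1) := by
  rw [single_eq_single_vecMulVec_single, mul_vecMulVec, vecMulVec_mul, vecMul_transpose]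

lemma dotProduct_self_single_add_single {i j : ι} (hij : i ≠ j) (a b : K) :
    (Pi.single i a + Pi.single j b) ⬝ᵥ (Pi.single i a + Pi.single j b) = a ^ 2 + b ^ 2 := by
  simp [hij, hij.symm, sq]

lemma diagonal_mulVec_single_add_single {d : ι → K} {i j : ι} (hdij : d i = d j) (a b : K) :
    diagonal d *ᵥ (Pi.single i a + Pi.single j b) = d i • (Pi.single i a + Pi.single j b) := by
  simp [mulVec_add, hdij, ← Pi.single_smul]

lemma householder_single_add_single_mulVec_single {i j : ι} (hij : i ≠ j) {a b : K}
    (hab : a ^ 2 + b ^ 2 ≠ 0) :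
    householder (Pi.single i a + Pi.single j b) *ᵥ Pi.single i 1 =
      (Pi.single i ((b ^ 2 - a ^ 2) / (a ^ 2 + b ^ 2) : K) +
        Pi.single j (-(2 * a * b) / (a ^ 2 + b ^ 2) : K) : ι → K) := by
  have hdot : (Pi.single i a + Pi.single j b) ⬝ᵥ Pi.single i 1 = a := by simp [hij]
  rw [householder_mulVec, dotProduct_self_single_add_single hij, hdot]
  ext k
  simp only [Pi.sub_apply, Pi.smul_apply, Pi.add_apply, Pi.single_apply, smul_eq_mul]
  split_ifs <;> grind

end Householder

section BilinForm

variable {ι K : Type*} [Fintype ι] [DecidableEq ι] [CommSemiring K]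
  (b : LinearMap.BilinForm K (Matrix ι ι K))

lemma eq_sum_smul_single (X : Matrix ι ι K) : X = ∑ i, ∑ j, X i j • single i j 1 := by
  simpa using matrix_eq_sum_single X

lemma diagonal_eq_sum_smul_single (x : ι → K) : diagonal x = ∑ i, x i • single i i 1 := by
  simp [smul_single, sum_single_eq_diagonal]

lemma apply_left_eq_sum_single (X Y : Matrix ι ι K) :
    b X Y = ∑ i, ∑ j, X i j * b (single i j 1) Y := by
  conv_lhs => rw [eq_sum_smul_single X]
  simp only [map_sum, map_smul, LinearMap.sum_apply, LinearMap.smul_apply, smul_eq_mul]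

lemma apply_right_eq_sum_single (X Y : Matrix ι ι K) :
    b X Y = ∑ i, ∑ j, Y i j * b X (single i j 1) := by
  conv_lhs => rw [eq_sum_smul_single Y]
  simp only [map_sum, map_smul, smul_eq_mul]

end BilinForm

section SignInvariant

variable {ι K : Type*} [Fintype ι] [DecidableEq ι] [CommRing K]

/-- A bilinear form on matrices is sign-invariant if conjugation by diagonal matrices with
entries `±1` preserves it. -/
def IsSignInvariant (b : LinearMap.BilinForm K (Matrix ι ι K)) : Prop :=
  ∀ s : ι → K, s * s = 1 → ∀ X Y,
    b (diagonal s * X * diagonal s) (diagonal s * Y * diagonal s) = b X Y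

namespace IsSignInvariant

variable [NoZeroDivisors K] [NeZero (2 : K)] {b : LinearMap.BilinForm K (Matrix ι ι K)}
  {i j k l : ι}

lemma apply_single_single_eq_zero_of_xor (hb : IsSignInvariant b) (m : ι)
    (hm : Xor (Xor (i = m) (j = m)) (Xor (k = m) (l = m))) :
    b (single i j 1) (single k l 1) = 0 := by
  let s : ι → K := Function.update 1 m (-1)
  have hs : s * s = 1 := by
    ext p
    by_cases hp : p = m <;> simp [s, hp]
  have hsign : s k * s l * (s i * s j) = -1 := by
    simp only [s, Function.update_apply, Pi.one_apply]
    grind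
  have hneg := hb s hs (single i j 1) (single k l 1)
  simp only [diagonal_mul_single_mul_diagonal, map_smul, LinearMap.smul_apply, smul_smul, hsign,
    neg_smul, one_smul] at hneg
  have htwo : 2 * b (single i j 1) (single k l 1) = 0 := by linear_combination -hneg
  exact (mul_eq_zero.mp htwo).resolve_left two_ne_zero

lemma apply_single_self_single_of_ne (hb : IsSignInvariant b) (hkl : k ≠ l) :
    b (single i i 1) (single k l 1) = 0 :=
  hb.apply_single_single_eq_zero_of_xor k (by grind)

lemma apply_single_single_of_ne (hb : IsSignInvariant b) (hij : i ≠ j)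
    (hkl : ¬(i = k ∧ j = l)) (hlk : ¬(j = k ∧ i = l)) :
    b (single i j 1) (single k l 1) = 0 := by
  by_cases hi : Xor (k = i) (l = i)
  · exact hb.apply_single_single_eq_zero_of_xor j (by grind)
  · exact hb.apply_single_single_eq_zero_of_xor i (by grind)

lemma apply_single_self (hb : IsSignInvariant b) (i : ι) (Y : Matrix ι ι K) :
    b (single i i 1) Y = ∑ j, Y j j * b (single i i 1) (single j j 1) := by
  rw [apply_right_eq_sum_single]
  refine sum_congr rfl fun k _ ↦ sum_eq_single_of_mem k (mem_univ k) fun l _ hlk ↦ ?_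
  rw [hb.apply_single_self_single_of_ne hlk.symm, mul_zero]

lemma apply_single_of_ne (hb : IsSignInvariant b) (htranspose : ∀ X Y, b X Yᵀ = b X Y)
    (hij : i ≠ j) (Y : Matrix ι ι K) :
    b (single i j 1) Y = (Y i j + Y j i) * b (single i j 1) (single i j 1) := by
  have hcoeff (k l : ι) : b (single i j 1) (single k l 1) =
      (single i j 1 k l + single j i 1 k l) * b (single i j 1) (single i j 1) := by
    by_cases hkl : i = k ∧ j = l
    · obtain ⟨rfl, rfl⟩ := hkl
      simp [hij]
    by_cases hlk : j = k ∧ i = l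
    · obtain ⟨rfl, rfl⟩ := hlk
      rw [← htranspose]
      simp [hij]
    simp [hkl, hlk, hb.apply_single_single_of_ne hij hkl hlk]
  rw [apply_right_eq_sum_single]
  generalize b (single i j 1) (single i j 1) = c at hcoeff ⊢
  simp [hcoeff, single_apply, ite_and, ← mul_assoc, ← sum_mul, mul_add, sum_add_distrib]

lemma apply_eq_sum (hb : IsSignInvariant b) (htranspose : ∀ X Y, b X Yᵀ = b X Y)
    (X Y : Matrix ι ι K) :
    b X Y = (∑ i, ∑ j, X i i * Y j j * b (single i i 1) (single j j 1)) +
      ∑ i, ∑ j, if i = j then 0 else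
        X i j * (Y i j + Y j i) * b (single i j 1) (single i j 1) := by
  have hterm (i j : ι) : X i j * b (single i j 1) Y =
      (if i = j then ∑ k, X i i * Y k k * b (single i i 1) (single k k 1) else 0) +
        if i = j then 0 else X i j * (Y i j + Y j i) * b (single i j 1) (single i j 1) := by
    split_ifs with hij
    · subst hij
      simp only [hb.apply_single_self i Y, mul_sum, mul_assoc, add_zero]
    · rw [hb.apply_single_of_ne htranspose hij, zero_add, mul_assoc]
  rw [apply_left_eq_sum_single]
  simp only [hterm, sum_add_distrib, sum_ite_eq, mem_univ, if_true]

end IsSignInvariant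

end SignInvariant

section SymmInnerProduct

variable {ι : Type*}

lemma isSymm_selfAdjointPart (X : Matrix ι ι ℝ) :
    (selfAdjointPart ℝ X : Matrix ι ι ℝ).IsSymm := by
  simpa [IsSymm, star_eq_conjTranspose] using (selfAdjointPart ℝ X).2.star_eq

lemma selfAdjointPart_of_isSymm {X : Matrix ι ι ℝ} (hX : X.IsSymm) :
    (selfAdjointPart ℝ X : Matrix ι ι ℝ) = X :=
  IsSelfAdjoint.coe_selfAdjointPart_apply ℝ (by simpa [IsSelfAdjoint, star_eq_conjTranspose])

lemma selfAdjointPart_transpose (X : Matrix ι ι ℝ) :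
    selfAdjointPart ℝ Xᵀ = selfAdjointPart ℝ X := by
  ext : 1
  simp [star_eq_conjTranspose, add_comm]

lemma selfAdjointPart_mul_mul_transpose [Fintype ι] (R X : Matrix ι ι ℝ) :
    (selfAdjointPart ℝ (R * X * Rᵀ) : Matrix ι ι ℝ) = R * selfAdjointPart ℝ X * Rᵀ := by
  simp [star_eq_conjTranspose, Matrix.mul_add, Matrix.add_mul, Matrix.mul_assoc]

lemma isSymm_mul_mul_transpose {K : Type*} [CommSemiring K] [Fintype ι] (R : Matrix ι ι K)
    {X : Matrix ι ι K} (hX : X.IsSymm) : (R * X * Rᵀ).IsSymm := by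
  simp [IsSymm, hX.eq, Matrix.mul_assoc]

lemma isSymm_single_self [DecidableEq ι] (i : ι) : (single i i (1 : ℝ)).IsSymm :=
  transpose_single i i 1

lemma isSymm_single_add_single [DecidableEq ι] (i j : ι) :
    (single i j (1 : ℝ) + single j i 1).IsSymm := by
  simpa using isSymm_add_transpose_self (single i j (1 : ℝ))

/-- `q` is an inner product on the space of real symmetric matrices; nothing is required of its
values at other matrices. -/
structure IsSymmInnerProduct (q : Matrix ι ι ℝ → Matrix ι ι ℝ → ℝ) : Prop where
  symm : ∀ X Y, X.IsSymm → Y.IsSymm → q X Y = q Y X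
  add_left : ∀ X Y Z, X.IsSymm → Y.IsSymm → Z.IsSymm → q (X + Y) Z = q X Z + q Y Z
  smul_left : ∀ (c : ℝ) (X Y : Matrix ι ι ℝ), X.IsSymm → Y.IsSymm → q (c • X) Y = c * q X Y
  pos : ∀ X, X.IsSymm → X ≠ 0 → 0 < q X X

/-- The coefficient of `X_ii Y_jj` in an inner product on symmetric matrices. -/
def diagCoeff [DecidableEq ι] (q : Matrix ι ι ℝ → Matrix ι ι ℝ → ℝ) (i j : ι) : ℝ :=
  q (single i i 1) (single j j 1)

/-- The coefficient of `X_ij Y_ij`, for `i ≠ j`, in a sign-invariant inner product on symmetric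
matrices. The factor `1 / 2` is there because the pairs `(i, j)` and `(j, i)` are both summed
over. -/
noncomputable def offDiagCoeff [DecidableEq ι] (q : Matrix ι ι ℝ → Matrix ι ι ℝ → ℝ) (i j : ι) :
    ℝ :=
  q (single i j 1 + single j i 1) (single i j 1 + single j i 1) / 2

lemma offDiagCoeff_comm [DecidableEq ι] (q : Matrix ι ι ℝ → Matrix ι ι ℝ → ℝ) (i j : ι) :
    offDiagCoeff q i j = offDiagCoeff q j i := by
  rw [offDiagCoeff, offDiagCoeff, add_comm]

namespace IsSymmInnerProduct

variable {q : Matrix ι ι ℝ → Matrix ι ι ℝ → ℝ} {X Y Z : Matrix ι ι ℝ}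

lemma add_right (hq : IsSymmInnerProduct q) (hX : X.IsSymm) (hY : Y.IsSymm) (hZ : Z.IsSymm) :
    q X (Y + Z) = q X Y + q X Z := by
  rw [hq.symm _ _ hX (hY.add hZ), hq.add_left _ _ _ hY hZ hX, hq.symm _ _ hY hX,
    hq.symm _ _ hZ hX]

lemma smul_right (hq : IsSymmInnerProduct q) (c : ℝ) (hX : X.IsSymm) (hY : Y.IsSymm) :
    q X (c • Y) = c * q X Y := by
  rw [hq.symm _ _ hX (hY.smul c), hq.smul_left _ _ _ hY hX, hq.symm _ _ hY hX]

lemma two_mul_apply (hq : IsSymmInnerProduct q) (hX : X.IsSymm) (hY : Y.IsSymm) :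
    2 * q X Y = q (X + Y) (X + Y) - q X X - q Y Y := by
  rw [hq.add_left _ _ _ hX hY (hX.add hY), hq.add_right hX hX hY, hq.add_right hY hX hY,
    hq.symm _ _ hY hX]
  ring

/-- The extension of an inner product on symmetric matrices to a bilinear form on all matrices
that vanishes on antisymmetric ones, so that it can be expanded in the elementary matrices. -/
noncomputable def form (hq : IsSymmInnerProduct q) : LinearMap.BilinForm ℝ (Matrix ι ι ℝ) :=
  LinearMap.mk₂ ℝ (fun X Y ↦ q (selfAdjointPart ℝ X) (selfAdjointPart ℝ Y))
    (fun X Y Z ↦ by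
      rw [map_add, AddSubgroup.coe_add, hq.add_left] <;> exact isSymm_selfAdjointPart _)
    (fun c X Y ↦ by
      rw [map_smul, selfAdjoint.val_smul, hq.smul_left, smul_eq_mul] <;>
        exact isSymm_selfAdjointPart _)
    (fun X Y Z ↦ by
      rw [map_add, AddSubgroup.coe_add, hq.add_right] <;> exact isSymm_selfAdjointPart _)
    (fun c X Y ↦ by
      rw [map_smul, selfAdjoint.val_smul, hq.smul_right, smul_eq_mul] <;>
        exact isSymm_selfAdjointPart _)

lemma form_apply (hq : IsSymmInnerProduct q) (X Y : Matrix ι ι ℝ) :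
    hq.form X Y = q (selfAdjointPart ℝ X) (selfAdjointPart ℝ Y) :=
  rfl

lemma form_of_isSymm (hq : IsSymmInnerProduct q) (hX : X.IsSymm) (hY : Y.IsSymm) :
    hq.form X Y = q X Y := by
  rw [form_apply, selfAdjointPart_of_isSymm hX, selfAdjointPart_of_isSymm hY]

lemma form_transpose_left (hq : IsSymmInnerProduct q) (X Y : Matrix ι ι ℝ) :
    hq.form Xᵀ Y = hq.form X Y := by
  rw [form_apply, form_apply, selfAdjointPart_transpose]

lemma form_transpose_right (hq : IsSymmInnerProduct q) (X Y : Matrix ι ι ℝ) :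
    hq.form X Yᵀ = hq.form X Y := by
  rw [form_apply, form_apply, selfAdjointPart_transpose]

variable [DecidableEq ι]

lemma form_single_self (hq : IsSymmInnerProduct q) (i j : ι) :
    hq.form (single i i 1) (single j j 1) = diagCoeff q i j :=
  hq.form_of_isSymm (isSymm_single_self i) (isSymm_single_self j)

lemma form_single_left_comm (hq : IsSymmInnerProduct q) (i j : ι) (Y : Matrix ι ι ℝ) :
    hq.form (single i j 1) Y = hq.form (single j i 1) Y := by
  rw [← transpose_single, form_transpose_left]

lemma form_single_right_comm (hq : IsSymmInnerProduct q) (X : Matrix ι ι ℝ) (i j : ι) :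
    hq.form X (single i j 1) = hq.form X (single j i 1) := by
  rw [← transpose_single, form_transpose_right]

lemma two_mul_form_single (hq : IsSymmInnerProduct q) (i j : ι) :
    2 * hq.form (single i j 1) (single i j 1) = offDiagCoeff q i j := by
  have hsymm := isSymm_single_add_single i j
  rw [offDiagCoeff, ← hq.form_of_isSymm hsymm hsymm]
  simp only [map_add, LinearMap.add_apply, hq.form_single_left_comm j i,
    hq.form_single_right_comm _ j i]
  ring

lemma diagCoeff_comm (hq : IsSymmInnerProduct q) (i j : ι) :
    diagCoeff q i j = diagCoeff q j i :=
  hq.symm _ _ (isSymm_single_self i) (isSymm_single_self j)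

lemma offDiagCoeff_pos (hq : IsSymmInnerProduct q) {i j : ι} (hij : i ≠ j) :
    0 < offDiagCoeff q i j := by
  refine half_pos (hq.pos _ (isSymm_single_add_single i j) fun h ↦ ?_)
  simpa [hij] using congrFun₂ h i j

lemma apply_diagonal [Fintype ι] (hq : IsSymmInnerProduct q) (x : ι → ℝ) :
    q (diagonal x) (diagonal x) = x ⬝ᵥ of (diagCoeff q) *ᵥ x := by
  rw [← hq.form_of_isSymm (isSymm_diagonal x) (isSymm_diagonal x), diagonal_eq_sum_smul_single]
  simp only [map_sum, map_smul, LinearMap.sum_apply, LinearMap.smul_apply, smul_eq_mul,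
    form_single_self, dotProduct, mulVec, of_apply, mul_sum]
  rw [sum_comm]
  exact sum_congr rfl fun i _ ↦ sum_congr rfl fun j _ ↦ by ring

lemma posDef_diagCoeff [Finite ι] (hq : IsSymmInnerProduct q) : (of (diagCoeff q)).PosDef := by
  have := Fintype.ofFinite ι
  refine .of_dotProduct_mulVec_pos (IsHermitian.ext fun i j ↦ hq.diagCoeff_comm j i) fun x hx ↦ ?_
  rw [star_trivial, ← hq.apply_diagonal]
  exact hq.pos _ (isSymm_diagonal x) (by simpa using hx)

variable [Fintype ι]

lemma form_vecMulVec_self (hq : IsSymmInnerProduct q) (hsign : IsSignInvariant hq.form) {i j : ι}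
    (hij : i ≠ j) (a b : ℝ) :
    hq.form (vecMulVec (Pi.single i a + Pi.single j b) (Pi.single i a + Pi.single j b))
        (vecMulVec (Pi.single i a + Pi.single j b) (Pi.single i a + Pi.single j b)) =
      a ^ 4 * diagCoeff q i i + b ^ 4 * diagCoeff q j j +
        2 * (a * b) ^ 2 * (offDiagCoeff q i j + diagCoeff q i j) := by
  have hexpand : vecMulVec (Pi.single i a + Pi.single j b) (Pi.single i a + Pi.single j b) =
      (a * a) • single i i 1 + (a * b) • single i j 1 + (a * b) • single j i 1 +
        (b * b) • single j j (1 : ℝ) := by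
    simp only [vecMulVec_add, add_vecMulVec, vecMulVec_single_single, smul_single, smul_eq_mul,
      mul_one, mul_comm b a]
    abel
  rw [hexpand]
  simp only [map_add, map_smul, LinearMap.add_apply, LinearMap.smul_apply, smul_eq_mul,
    hq.form_single_left_comm j i, hq.form_single_right_comm _ j i, form_single_self,
    hsign.apply_single_self_single_of_ne hij,
    hsign.apply_single_single_of_ne (k := i) (l := i) hij (by grind) (by grind),
    hsign.apply_single_single_of_ne (k := j) (l := j) hij (by grind) (by grind),
    ← hq.two_mul_form_single, hq.diagCoeff_comm j i]
  ring

lemma apply_eq_sum_of_isSignInvariant (hq : IsSymmInnerProduct q)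
    (hsign : IsSignInvariant hq.form) (hX : X.IsSymm) (hY : Y.IsSymm) :
    q X Y = (∑ i, ∑ j, diagCoeff q i j * X i i * Y j j) +
      ∑ i, ∑ j, if i = j then 0 else offDiagCoeff q i j * X i j * Y i j := by
  rw [← hq.form_of_isSymm hX hY, hsign.apply_eq_sum hq.form_transpose_right]
  simp only [form_single_self, ← hq.two_mul_form_single, hY.apply]
  congr 1
  · exact sum_congr rfl fun i _ ↦ sum_congr rfl fun j _ ↦ by ring
  · exact sum_congr rfl fun i _ ↦ sum_congr rfl fun j _ ↦ if_congr Iff.rfl rfl (by ring)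

end IsSymmInnerProduct

end SymmInnerProduct

section InvariantMetric

variable {ι : Type*} [Fintype ι] [DecidableEq ι]

/-- `g` is a field of inner products on symmetric matrices over the positive definite matrices,
invariant under the conjugation action of the orthogonal group. -/
structure IsOrthogonalInvariantMetric
    (g : Matrix ι ι ℝ → Matrix ι ι ℝ → Matrix ι ι ℝ → ℝ) : Prop where
  isSymmInnerProduct : ∀ Sig, Sig.PosDef → IsSymmInnerProduct (g Sig)
  apply_conj_self : ∀ R, R * Rᵀ = 1 → ∀ Sig, Sig.PosDef → ∀ X, X.IsSymm →
    g (R * Sig * Rᵀ) (R * X * Rᵀ) (R * X * Rᵀ) = g Sig X X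

lemma posDef_mul_mul_transpose {R Sig : Matrix ι ι ℝ} (hR : R * Rᵀ = 1) (hSig : Sig.PosDef) :
    (R * Sig * Rᵀ).PosDef := by
  have hunit : IsUnit R := .of_mul_eq_one _ hR
  simpa [star_eq_conjTranspose] using (Matrix.IsUnit.posDef_star_right_conjugate_iff hunit).2 hSig

namespace IsOrthogonalInvariantMetric

variable {g : Matrix ι ι ℝ → Matrix ι ι ℝ → Matrix ι ι ℝ → ℝ} {R X Y : Matrix ι ι ℝ}

lemma apply_conj (hg : IsOrthogonalInvariantMetric g) (hR : R * Rᵀ = 1) {Sig : Matrix ι ι ℝ}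
    (hSig : Sig.PosDef) (hX : X.IsSymm) (hY : Y.IsSymm) :
    g (R * Sig * Rᵀ) (R * X * Rᵀ) (R * Y * Rᵀ) = g Sig X Y := by
  have hpolar := (hg.isSymmInnerProduct _ (posDef_mul_mul_transpose hR hSig)).two_mul_apply
    (isSymm_mul_mul_transpose R hX) (isSymm_mul_mul_transpose R hY)
  rw [← Matrix.add_mul, ← Matrix.mul_add, hg.apply_conj_self R hR Sig hSig _ (hX.add hY),
    hg.apply_conj_self R hR Sig hSig _ hX, hg.apply_conj_self R hR Sig hSig _ hY,
    ← (hg.isSymmInnerProduct Sig hSig).two_mul_apply hX hY] at hpolar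
  exact mul_left_cancel₀ two_ne_zero hpolar

variable {d : ι → ℝ}

lemma isSymmInnerProduct_diagonal (hg : IsOrthogonalInvariantMetric g) (hd : ∀ i, 0 < d i) :
    IsSymmInnerProduct (g (diagonal d)) :=
  hg.isSymmInnerProduct _ (.diagonal hd)

lemma form_conj_of_commute (hg : IsOrthogonalInvariantMetric g) (hd : ∀ i, 0 < d i)
    (hR : R * Rᵀ = 1) (hcomm : Commute (diagonal d) R) (X Y : Matrix ι ι ℝ) :
    (hg.isSymmInnerProduct_diagonal hd).form (R * X * Rᵀ) (R * Y * Rᵀ) =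
      (hg.isSymmInnerProduct_diagonal hd).form X Y := by
  have hfix : R * diagonal d * Rᵀ = diagonal d := by
    rw [← hcomm.eq, Matrix.mul_assoc, hR, Matrix.mul_one]
  rw [IsSymmInnerProduct.form_apply, IsSymmInnerProduct.form_apply,
    selfAdjointPart_mul_mul_transpose, selfAdjointPart_mul_mul_transpose]
  conv_lhs => rw [← hfix]
  exact hg.apply_conj hR (.diagonal hd) (isSymm_selfAdjointPart X) (isSymm_selfAdjointPart Y)

lemma isSignInvariant_form (hg : IsOrthogonalInvariantMetric g) (hd : ∀ i, 0 < d i) :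
    IsSignInvariant (hg.isSymmInnerProduct_diagonal hd).form := by
  intro s hs X Y
  have horth : diagonal s * (diagonal s)ᵀ = 1 := by
    rw [diagonal_transpose, diagonal_mul_diagonal]
    exact (congrArg diagonal hs).trans diagonal_one
  simpa using hg.form_conj_of_commute hd horth (commute_diagonal d s) X Y

lemma apply_submatrix (hg : IsOrthogonalInvariantMetric g) (hd : ∀ i, 0 < d i)
    (σ : Equiv.Perm ι) (hX : X.IsSymm) (hY : Y.IsSymm) :
    g (diagonal (d ∘ σ)) (X.submatrix σ σ) (Y.submatrix σ σ) = g (diagonal d) X Y := by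
  rw [← submatrix_diagonal_equiv]
  simp only [← permMatrix_mul_mul_transpose]
  exact hg.apply_conj (permMatrix_mul_transpose σ) (.diagonal hd) hX hY

lemma diagCoeff_comp_perm (hg : IsOrthogonalInvariantMetric g) (hd : ∀ i, 0 < d i)
    (σ : Equiv.Perm ι) (i j : ι) :
    diagCoeff (g (diagonal (d ∘ σ))) i j = diagCoeff (g (diagonal d)) (σ i) (σ j) := by
  rw [diagCoeff, diagCoeff, ← hg.apply_submatrix hd σ, single_submatrix_perm,
    single_submatrix_perm] <;> exact isSymm_single_self _

lemma offDiagCoeff_comp_perm (hg : IsOrthogonalInvariantMetric g) (hd : ∀ i, 0 < d i)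
    (σ : Equiv.Perm ι) (i j : ι) :
    offDiagCoeff (g (diagonal (d ∘ σ))) i j = offDiagCoeff (g (diagonal d)) (σ i) (σ j) := by
  rw [offDiagCoeff, offDiagCoeff, ← hg.apply_submatrix hd σ, submatrix_add, Pi.add_apply,
    Pi.add_apply, single_submatrix_perm, single_submatrix_perm] <;>
    exact isSymm_single_add_single _ _

lemma diagCoeff_self_eq_of_eq (hg : IsOrthogonalInvariantMetric g) (hd : ∀ i, 0 < d i) {i j : ι}
    (hdij : d i = d j) :
    diagCoeff (g (diagonal d)) i i = diagCoeff (g (diagonal d)) j j := by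
  have hswap : d ∘ Equiv.swap i j = d := by
    rw [Equiv.comp_swap_eq_update, hdij, Function.update_eq_self, ← hdij, Function.update_eq_self]
  simpa [hswap] using hg.diagCoeff_comp_perm hd (Equiv.swap i j) i i

lemma diagCoeff_self_eq_add (hg : IsOrthogonalInvariantMetric g) (hd : ∀ i, 0 < d i) {i j : ι}
    (hij : i ≠ j) (hdij : d i = d j) :
    diagCoeff (g (diagonal d)) i i =
      offDiagCoeff (g (diagonal d)) i j + diagCoeff (g (diagonal d)) i j := by
  -- The vector `(1, 2)` makes the entries of the reflection rational: they are `±3/5` and `-4/5`.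
  let v : ι → ℝ := Pi.single i 1 + Pi.single j 2
  have hv : v ⬝ᵥ v ≠ 0 := by norm_num [v, dotProduct_self_single_add_single hij]
  have hdv : diagonal d *ᵥ v = d i • v := diagonal_mulVec_single_add_single hdij 1 2
  have hcomm : Commute (diagonal d) (householder v) :=
    commute_householder hdv (by rw [← mulVec_transpose, diagonal_transpose, hdv])
  have hinv := hg.form_conj_of_commute hd (householder_mul_transpose hv) hcomm
    (single i i 1) (single i i 1)
  rw [householder_mul_single_mul_transpose,
    householder_single_add_single_mulVec_single hij (by norm_num),
    (hg.isSymmInnerProduct_diagonal hd).form_vecMulVec_self (hg.isSignInvariant_form hd) hij,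
    IsSymmInnerProduct.form_single_self, ← hg.diagCoeff_self_eq_of_eq hd hdij] at hinv
  linear_combination -(625 / 288) * hinv

end IsOrthogonalInvariantMetric

end InvariantMetric

section Positions

variable {n : ℕ} (hn : 2 ≤ n)

lemma perm2_apply_zero {i j : Fin n} (hij : i ≠ j) : perm2 hn i j ⟨0, by omega⟩ = i := by
  have hne : Equiv.swap ⟨0, by omega⟩ i j ≠ (⟨0, by omega⟩ : Fin n) := by
    rw [ne_eq, Equiv.swap_apply_eq_iff, Equiv.swap_apply_left]
    exact hij.symm
  rw [perm2, Equiv.Perm.mul_apply, Equiv.swap_apply_of_ne_of_ne (by simp) hne.symm,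
    Equiv.swap_apply_left]

lemma perm2_apply_one (i j : Fin n) : perm2 hn i j ⟨1, by omega⟩ = j := by
  simp [perm2]

end Positions

section Main

variable {n : ℕ} (hn : 2 ≤ n)
  (g : Matrix (Fin n) (Fin n) ℝ → Matrix (Fin n) (Fin n) ℝ → Matrix (Fin n) (Fin n) ℝ → ℝ)

/-- The paper's `γ`: the coefficient of `X₁₁²` at `diag d`. -/
def gammaFun (d : Fin n → ℝ) : ℝ :=
  diagCoeff (g (diagonal d)) ⟨0, by omega⟩ ⟨0, by omega⟩

/-- The paper's `α`: the coefficient of `X₁₂²` at `diag d`. -/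
noncomputable def alphaFun (d : Fin n → ℝ) : ℝ :=
  offDiagCoeff (g (diagonal d)) ⟨0, by omega⟩ ⟨1, by omega⟩

/-- The paper's `β`: the coefficient of `X₁₁ X₂₂` at `diag d`. -/
def betaFun (d : Fin n → ℝ) : ℝ :=
  diagCoeff (g (diagonal d)) ⟨0, by omega⟩ ⟨1, by omega⟩

namespace IsOrthogonalInvariantMetric

variable {g} {d : Fin n → ℝ}

lemma gammaFun_reord1 (hg : IsOrthogonalInvariantMetric g) (hd : PosVec d) (i : Fin n) :
    gammaFun hn g (reord1 hn d i) = diagCoeff (g (diagonal d)) i i := by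
  rw [gammaFun, reord1, hg.diagCoeff_comp_perm hd, Equiv.swap_apply_left]

lemma alphaFun_reord2 (hg : IsOrthogonalInvariantMetric g) (hd : PosVec d) {i j : Fin n}
    (hij : i ≠ j) : alphaFun hn g (reord2 hn d i j) = offDiagCoeff (g (diagonal d)) i j := by
  rw [alphaFun, reord2, hg.offDiagCoeff_comp_perm hd, perm2_apply_zero hn hij, perm2_apply_one]

lemma betaFun_reord2 (hg : IsOrthogonalInvariantMetric g) (hd : PosVec d) {i j : Fin n}
    (hij : i ≠ j) : betaFun hn g (reord2 hn d i j) = diagCoeff (g (diagonal d)) i j := by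
  rw [betaFun, reord2, hg.diagCoeff_comp_perm hd, perm2_apply_zero hn hij, perm2_apply_one]

lemma smat_eq_of_diagCoeff (hg : IsOrthogonalInvariantMetric g) (hd : PosVec d) :
    Smat hn (gammaFun hn g) (betaFun hn g) d = of (diagCoeff (g (diagonal d))) := by
  ext i j
  rw [Smat, of_apply, of_apply]
  split_ifs with hij
  · rw [hg.gammaFun_reord1 hn hd, hij]
  · exact hg.betaFun_reord2 hn hd hij

lemma apply_diagonal_eq_gD (hg : IsOrthogonalInvariantMetric g) (hd : PosVec d)
    {X Y : Matrix (Fin n) (Fin n) ℝ} (hX : X.IsSymm) (hY : Y.IsSymm) :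
    g (diagonal d) X Y = gD hn (gammaFun hn g) (alphaFun hn g) (betaFun hn g) d X Y := by
  have hdiag (i j : Fin n) : diagCoeff (g (diagonal d)) i j * X i i * Y j j =
      (if i = j then gammaFun hn g (reord1 hn d i) * X i i * Y i i else 0) +
        if i = j then 0 else betaFun hn g (reord2 hn d i j) * X i i * Y j j := by
    split_ifs with hij
    · rw [hg.gammaFun_reord1 hn hd, hij, add_zero]
    · rw [hg.betaFun_reord2 hn hd hij, zero_add]
  have hoffDiag (i j : Fin n) :
      (if i = j then 0 else offDiagCoeff (g (diagonal d)) i j * X i j * Y i j) =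
        if i = j then 0 else alphaFun hn g (reord2 hn d i j) * X i j * Y i j := by
    split_ifs with hij
    · rfl
    · rw [hg.alphaFun_reord2 hn hd hij]
  rw [(hg.isSymmInnerProduct_diagonal hd).apply_eq_sum_of_isSignInvariant
    (hg.isSignInvariant_form hd) hX hY, gD]
  simp only [hdiag, hoffDiag, sum_add_distrib, sum_ite_eq, mem_univ, if_true]
  ring

lemma sym1n_gammaFun (hg : IsOrthogonalInvariantMetric g) : Sym1n hn (gammaFun hn g) := by
  intro σ hσ d hd
  rw [gammaFun, hg.diagCoeff_comp_perm hd, hσ, gammaFun]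

lemma sym2n_alphaFun (hg : IsOrthogonalInvariantMetric g) : Sym2n hn (alphaFun hn g) := by
  rintro σ (⟨h0, h1⟩ | ⟨h0, h1⟩) d hd
  · rw [alphaFun, hg.offDiagCoeff_comp_perm hd, h0, h1, alphaFun]
  · rw [alphaFun, hg.offDiagCoeff_comp_perm hd, h0, h1, offDiagCoeff_comm, alphaFun]

lemma sym2n_betaFun (hg : IsOrthogonalInvariantMetric g) : Sym2n hn (betaFun hn g) := by
  rintro σ (⟨h0, h1⟩ | ⟨h0, h1⟩) d hd
  · rw [betaFun, hg.diagCoeff_comp_perm hd, h0, h1, betaFun]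
  · rw [betaFun, hg.diagCoeff_comp_perm hd, h0, h1,
      (hg.isSymmInnerProduct_diagonal hd).diagCoeff_comm, betaFun]

lemma compatCond (hg : IsOrthogonalInvariantMetric g) :
    CompatCond hn (gammaFun hn g) (alphaFun hn g) (betaFun hn g) :=
  fun _ hd heq ↦ hg.diagCoeff_self_eq_add hd (by simp) heq

lemma positivityCond (hg : IsOrthogonalInvariantMetric g) :
    PositivityCond hn (gammaFun hn g) (betaFun hn g) := by
  intro d hd
  rw [hg.smat_eq_of_diagCoeff hn hd]
  exact (hg.isSymmInnerProduct_diagonal hd).posDef_diagCoeff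

end IsOrthogonalInvariantMetric

end Main

/-- Characterization of `O(n)`-invariant metrics on SPD matrices (necessity).
Any `O(n)`-invariant family of inner products on `Sym(n)` indexed by `SPD(n)` is given at
positive diagonal matrices by three functions `γ, α, β` satisfying the compatibility,
positivity and symmetry conditions. -/
theorem o_n_invariant_metric_characterization (n : ℕ) (hn : 2 ≤ n)
    (g : Matrix (Fin n) (Fin n) ℝ → Matrix (Fin n) (Fin n) ℝ → Matrix (Fin n) (Fin n) ℝ → ℝ)
    (hgsym : ∀ Sig : Matrix (Fin n) (Fin n) ℝ, Sig.PosDef →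
      ∀ X Y, X.IsSymm → Y.IsSymm → g Sig X Y = g Sig Y X)
    (hgadd : ∀ Sig : Matrix (Fin n) (Fin n) ℝ, Sig.PosDef →
      ∀ X Y Z, X.IsSymm → Y.IsSymm → Z.IsSymm → g Sig (X + Y) Z = g Sig X Z + g Sig Y Z)
    (hgsmul : ∀ Sig : Matrix (Fin n) (Fin n) ℝ, Sig.PosDef →
      ∀ (c : ℝ) (X Y : Matrix (Fin n) (Fin n) ℝ), X.IsSymm → Y.IsSymm →
        g Sig (c • X) Y = c * g Sig X Y)
    (hgpos : ∀ Sig : Matrix (Fin n) (Fin n) ℝ, Sig.PosDef →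
      ∀ X, X.IsSymm → X ≠ 0 → 0 < g Sig X X)
    (hinv : ∀ R : Matrix (Fin n) (Fin n) ℝ, R * Rᵀ = 1 →
      ∀ Sig : Matrix (Fin n) (Fin n) ℝ, Sig.PosDef → ∀ X, X.IsSymm →
        g (R * Sig * Rᵀ) (R * X * Rᵀ) (R * X * Rᵀ) = g Sig X X) :
    ∃ γ α β : (Fin n → ℝ) → ℝ,
      (∀ d, PosVec d → 0 < γ d) ∧
      (∀ d, PosVec d → 0 < α d) ∧
      (∀ d : Fin n → ℝ, PosVec d → ∀ X : Matrix (Fin n) (Fin n) ℝ, X.IsSymm →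
        g (Matrix.diagonal d) X X = gD hn γ α β d X X) ∧
      CompatCond hn γ α β ∧ PositivityCond hn γ β ∧
      Sym1n hn γ ∧ Sym2n hn α ∧ Sym2n hn β := by
  have hg : IsOrthogonalInvariantMetric g :=
    ⟨fun Sig hSig ↦ ⟨hgsym Sig hSig, hgadd Sig hSig, hgsmul Sig hSig, hgpos Sig hSig⟩, hinv⟩
  refine ⟨gammaFun hn g, alphaFun hn g, betaFun hn g, fun d hd ↦ ?_, fun d hd ↦ ?_,
    fun d hd X hX ↦ hg.apply_diagonal_eq_gD hn hd hX hX, hg.compatCond hn, hg.positivityCond hn,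
    hg.sym1n_gammaFun hn, hg.sym2n_alphaFun hn, hg.sym2n_betaFun hn⟩
  · exact (hg.isSymmInnerProduct_diagonal hd).posDef_diagCoeff.diag_pos
  · exact (hg.isSymmInnerProduct_diagonal hd).offDiagCoeff_pos (by simp)
end

section
/- Let (g_Σ)_{Σ ∈ SPD(n)} be the O(n)-invariant family of inner products on Sym(n) determined by functions γ, α : (0,∞)ⁿ → (0,∞) and β : (0,∞)ⁿ → ℝ satisfying the compatibility, positivity and symmetry conditions, via g_D(X,X) = Σ_i γ(d_i, d_{k≠i}) X_{ii}² + Σ_{i≠j} α(d_i, d_j, d_{k≠i,j}) X_{ij}² + Σ_{i≠j} β(d_i, d_j, d_{k≠i,j}) X_{ii} X_{jj} at positive diagonal D and g_Σ(X,X) = g_D(PᵀXP, PᵀXP) for Σ = PDPᵀ. If α, β, γ are continuous, then g is continuous in the following sense: for every ε > 0 and every Σ ∈ SPD(n), there exists η > 0 such that for all Λ ∈ SPD(n) with ‖Σ − Λ‖_F ≤ η and all X ∈ Sym(n), |g_Σ(X,X) − g_Λ(X,X)| ≤ ε·‖X‖_F². -/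
open Matrix Finset

/-!
The formula for `g` can be read off any orthogonal `P` diagonalizing `Σ`: it is
`g_Σ(X, X) = g_D(Pᵀ X P, Pᵀ X P)` with `D = Pᵀ Σ P`, and the right-hand side is jointly continuous
in `(P, Σ, X)`. Since the orthogonal group is compact and the set of pairs with `Pᵀ Σ P` diagonal is
closed, continuity descends along the projection forgetting `P`, even though no continuous choice
of `P` need exist where eigenvalues collide. The estimate is then uniform on the compact unit sphere
of symmetric matrices, and extends to all of them by homogeneity.
-/

open Filter Function Topology

section CompactFamilies

variable {A B C : Type*} [TopologicalSpace A] [TopologicalSpace B] [TopologicalSpace C]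

theorem continuousOn_of_isCompact_of_isClosed_rel {K : Set A} {S : Set B} {R : Set (A × B)}
    {f : A × B → C} {g : B → C} (hK : IsCompact K) (hR : IsClosed R)
    (hKR : ∀ b ∈ S, ∃ a ∈ K, (a, b) ∈ R) (hf : ContinuousOn f (K ×ˢ S))
    (hgf : ∀ a ∈ K, ∀ b ∈ S, (a, b) ∈ R → g b = f (a, b)) : ContinuousOn g S := by
  intro b hb
  have : Nonempty A := (hKR b hb).nonempty
  choose! s hsK hsR using hKR
  refine tendsto_iff_ultrafilter _ _ _ |>.2 fun U hU ↦ ?_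
  have hUb : (U : Filter B) ≤ 𝓝 b := hU.trans inf_le_left
  have hUS : ∀ᶠ x in U, x ∈ S := hU.trans inf_le_right (mem_principal_self S)
  obtain ⟨a, haK, hsa⟩ := hK.ultrafilter_le_nhds' (U.map s) (hUS.mono hsK)
  have hgraph : Tendsto (fun x ↦ (s x, x)) U (𝓝 (a, b)) := Tendsto.prodMk_nhds hsa hUb
  have habR : (a, b) ∈ R := hR.mem_of_tendsto hgraph (hUS.mono hsR)
  have hfs : Tendsto (fun x ↦ f (s x, x)) U (𝓝 (f (a, b))) :=
    (hf (a, b) ⟨haK, hb⟩).tendsto.comp <|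
      tendsto_nhdsWithin_iff.2 ⟨hgraph, hUS.mono fun x hx ↦ ⟨hsK x hx, hx⟩⟩
  rw [hgf a haK b hb habR]
  exact hfs.congr' (hUS.mono fun x hx ↦ (hgf _ (hsK x hx) x hx (hsR x hx)).symm)

variable {E : Type*} [NormedAddCommGroup E] [NormedSpace ℝ E] [ProperSpace E]

theorem eventually_abs_sub_le_mul_norm_sq {S : Set B} {V : Set E} {F : B → E → ℝ}
    (hV : IsClosed V) (hsmul : ∀ (c : ℝ), ∀ x ∈ V, c • x ∈ V)
    (hF : ContinuousOn (uncurry F) (S ×ˢ V))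
    (hhom : ∀ b ∈ S, ∀ (c : ℝ), ∀ x ∈ V, F b (c • x) = c ^ 2 * F b x)
    {b₀ : B} (hb₀ : b₀ ∈ S) {ε : ℝ} (hε : 0 < ε) :
    ∀ᶠ b in 𝓝[S] b₀, ∀ x ∈ V, |F b₀ x - F b x| ≤ ε * ‖x‖ ^ 2 := by
  have hsphere : IsCompact (Metric.sphere (0 : E) 1 ∩ V) := (isCompact_sphere 0 1).inter_right hV
  obtain ⟨N, hN, hclose⟩ := hsphere.mem_uniformity_of_prod
    (hF.mono (Set.prod_mono_right Set.inter_subset_right)) hb₀ (Metric.dist_mem_uniformity hε)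
  filter_upwards [hN, self_mem_nhdsWithin] with b hbN hbS x hxV
  have hzero : ∀ b ∈ S, F b 0 = 0 := fun b hb ↦ by simpa using hhom b hb 0 x hxV
  rcases eq_or_ne x 0 with rfl | hx
  · simp [hzero b₀ hb₀, hzero b hbS]
  set u : E := ‖x‖⁻¹ • x
  have huV : u ∈ V := hsmul _ x hxV
  have hu : u ∈ Metric.sphere (0 : E) 1 := by simp [u, norm_smul, hx]
  have hxu : x = ‖x‖ • u := by simp [u, smul_smul, hx]
  have hclose_u : |F b₀ u - F b u| ≤ ε := by
    rw [abs_sub_comm]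
    exact (hclose b hbN u ⟨hu, huV⟩).le
  calc |F b₀ x - F b x|
      = |F b₀ (‖x‖ • u) - F b (‖x‖ • u)| := by rw [← hxu]
    _ = ‖x‖ ^ 2 * |F b₀ u - F b u| := by
        rw [hhom b₀ hb₀ _ u huV, hhom b hbS _ u huV, ← mul_sub, abs_mul, abs_sq]
    _ ≤ ε * ‖x‖ ^ 2 := by rw [mul_comm]; gcongr

end CompactFamilies

section Diagonalization

variable {ι : Type*}

theorem isClosed_setOf_isSymm {R : Type*} [TopologicalSpace R] [T2Space R] :
    IsClosed {M : Matrix ι ι R | M.IsSymm} :=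
  isClosed_eq continuous_id.matrix_transpose continuous_id

theorem isClosed_setOf_isDiag {R : Type*} [TopologicalSpace R] [T1Space R] [Zero R] :
    IsClosed {M : Matrix ι ι R | M.IsDiag} := by
  simp only [IsDiag, Pairwise, Set.ofPred_forall]
  exact isClosed_iInter fun i ↦ isClosed_iInter fun j ↦ isClosed_iInter fun _ ↦
    isClosed_singleton.preimage (continuous_id.matrix_elem i j)

variable [DecidableEq ι] [Fintype ι]

theorem isCompact_unitaryGroup {𝕜 : Type*} [RCLike 𝕜] :
    IsCompact (unitaryGroup ι 𝕜 : Set (Matrix ι ι 𝕜)) := by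
  have hbox : IsCompact {U : Matrix ι ι 𝕜 | U ∈ Set.univ.pi fun _ ↦ Set.univ.pi fun _ ↦
      Metric.closedBall 0 1} :=
    isCompact_univ_pi fun _ ↦ isCompact_univ_pi fun _ ↦ isCompact_closedBall 0 1
  refine hbox.of_isClosed_subset isClosed_unitary fun U hU i _ j _ ↦ ?_
  simpa using entry_norm_bound_of_unitary hU i j

variable {P M : Matrix ι ι ℝ}

theorem exists_mem_orthogonalGroup_isDiag (hM : M.IsHermitian) :
    ∃ P ∈ orthogonalGroup ι ℝ, (Pᵀ * M * P).IsDiag := by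
  refine ⟨hM.eigenvectorUnitary, hM.eigenvectorUnitary.2, ?_⟩
  have hdiag := hM.conjStarAlgAut_star_eigenvectorUnitary
  rw [Unitary.conjStarAlgAut_star_apply] at hdiag
  exact hdiag ▸ isDiag_diagonal _

theorem mul_diagonal_diag_mul_transpose (hP : P ∈ orthogonalGroup ι ℝ)
    (hdiag : (Pᵀ * M * P).IsDiag) : P * diagonal (Pᵀ * M * P).diag * Pᵀ = M := by
  have hPP : P * Pᵀ = 1 := (mem_orthogonalGroup_iff _ _).1 hP
  calc P * diagonal (Pᵀ * M * P).diag * Pᵀ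
      = (P * Pᵀ) * M * (P * Pᵀ) := by rw [hdiag.diagonal_diag]; simp only [Matrix.mul_assoc]
    _ = M := by rw [hPP, Matrix.one_mul, Matrix.mul_one]

theorem posDef_transpose_mul_mul (hM : M.PosDef) (hP : P ∈ orthogonalGroup ι ℝ) :
    (Pᵀ * M * P).PosDef :=
  hM.conjTranspose_mul_mul_same <|
    mulVec_injective_of_isUnit (Unitary.toUnits ⟨P, hP⟩).isUnit

/-- `g` is the `O(n)`-invariant extension to positive definite base points of the family of
functions `q d` attached to the diagonal base points `diagonal d`. The set `V` holds the tangent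
vectors at which this is required, such as the symmetric matrices. -/
def IsOrthogonalExtension {C : Type*} (V : Set (Matrix ι ι ℝ))
    (q : (ι → ℝ) → Matrix ι ι ℝ → C) (g : Matrix ι ι ℝ → Matrix ι ι ℝ → C) : Prop :=
  ∀ P ∈ orthogonalGroup ι ℝ, ∀ d : ι → ℝ, (∀ i, 0 < d i) → ∀ X ∈ V,
    g (P * diagonal d * Pᵀ) X = q d (Pᵀ * X * P)

namespace IsOrthogonalExtension

variable {V : Set (Matrix ι ι ℝ)}

theorem apply_eq_of_isDiag {C : Type*} {q : (ι → ℝ) → Matrix ι ι ℝ → C}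
    {g : Matrix ι ι ℝ → Matrix ι ι ℝ → C} (hg : IsOrthogonalExtension V q g) (hM : M.PosDef)
    (hP : P ∈ orthogonalGroup ι ℝ) (hdiag : (Pᵀ * M * P).IsDiag) {X : Matrix ι ι ℝ} (hX : X ∈ V) :
    g M X = q (Pᵀ * M * P).diag (Pᵀ * X * P) := by
  have hpos : ∀ i, 0 < (Pᵀ * M * P).diag i :=
    fun _ ↦ (posDef_transpose_mul_mul hM hP).diag_pos
  have hgP := hg P hP _ hpos X hX
  rwa [mul_diagonal_diag_mul_transpose hP hdiag] at hgP

theorem continuousOn_uncurry {C : Type*} [TopologicalSpace C] {q : (ι → ℝ) → Matrix ι ι ℝ → C}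
    {g : Matrix ι ι ℝ → Matrix ι ι ℝ → C} (hg : IsOrthogonalExtension V q g)
    (hq : ContinuousOn (uncurry q) ({d | ∀ i, 0 < d i} ×ˢ Set.univ)) :
    ContinuousOn (uncurry g) ({M | M.PosDef} ×ˢ V) := by
  let conj (p : Matrix ι ι ℝ × Matrix ι ι ℝ × Matrix ι ι ℝ) : (ι → ℝ) × Matrix ι ι ℝ :=
    ((p.1ᵀ * p.2.1 * p.1).diag, p.1ᵀ * p.2.2 * p.1)
  have hclosed : IsClosed {p : Matrix ι ι ℝ × Matrix ι ι ℝ × Matrix ι ι ℝ |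
      (p.1ᵀ * p.2.1 * p.1).IsDiag} :=
    isClosed_setOf_isDiag.preimage
      (f := fun p : Matrix ι ι ℝ × Matrix ι ι ℝ × Matrix ι ι ℝ ↦ p.1ᵀ * p.2.1 * p.1) (by fun_prop)
  refine continuousOn_of_isCompact_of_isClosed_rel (f := uncurry q ∘ conj)
    isCompact_unitaryGroup hclosed ?_ ?_ ?_
  · rintro ⟨M, X⟩ ⟨hM, -⟩
    exact exists_mem_orthogonalGroup_isDiag (PosDef.isHermitian hM)
  · refine hq.comp (by fun_prop) ?_
    rintro ⟨P, M, X⟩ ⟨hP, hM, -⟩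
    exact ⟨fun _ ↦ (posDef_transpose_mul_mul hM hP).diag_pos, Set.mem_univ _⟩
  · rintro P hP ⟨M, X⟩ ⟨hM, hX⟩ hdiag
    exact hg.apply_eq_of_isDiag hM hP hdiag hX

theorem apply_smul {q : (ι → ℝ) → Matrix ι ι ℝ → ℝ} {g : Matrix ι ι ℝ → Matrix ι ι ℝ → ℝ}
    (hg : IsOrthogonalExtension V q g) {c : ℝ} (hq : ∀ d X, q d (c • X) = c ^ 2 * q d X)
    (hM : M.PosDef) {X : Matrix ι ι ℝ} (hX : X ∈ V) (hcX : c • X ∈ V) :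
    g M (c • X) = c ^ 2 * g M X := by
  obtain ⟨P, hP, hdiag⟩ := exists_mem_orthogonalGroup_isDiag hM.isHermitian
  rw [hg.apply_eq_of_isDiag hM hP hdiag hX, hg.apply_eq_of_isDiag hM hP hdiag hcX,
    Matrix.mul_smul, Matrix.smul_mul, hq]

end IsOrthogonalExtension

end Diagonalization

section InvariantMetric

variable {n : ℕ}

open scoped Matrix.Norms.Frobenius in
theorem frobNorm_eq_norm (M : Matrix (Fin n) (Fin n) ℝ) : frobNorm M = ‖M‖ := by
  simp [frobNorm, frobenius_norm_def, Real.sqrt_eq_rpow]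

variable (hn : 2 ≤ n) {γ α β : (Fin n → ℝ) → ℝ}

theorem gD_smul_smul (d : Fin n → ℝ) (a b : ℝ) (X Y : Matrix (Fin n) (Fin n) ℝ) :
    gD hn γ α β d (a • X) (b • Y) = a * b * gD hn γ α β d X Y := by
  have hterm (c x y : ℝ) : c * (a * x) * (b * y) = a * b * (c * x * y) := by ring
  simp only [gD, Matrix.smul_apply, smul_eq_mul, hterm, mul_add, Finset.mul_sum, mul_ite, mul_zero]

theorem continuousOn_gD (hγ : ContinuousOn γ {d | PosVec d}) (hα : ContinuousOn α {d | PosVec d})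
    (hβ : ContinuousOn β {d | PosVec d}) :
    ContinuousOn (uncurry fun d X ↦ gD hn γ α β d X X) ({d | PosVec d} ×ˢ Set.univ) := by
  have hcoeff {f : (Fin n → ℝ) → ℝ} (hf : ContinuousOn f {d | PosVec d})
      (σ : Equiv.Perm (Fin n)) : ContinuousOn
        (fun p : (Fin n → ℝ) × Matrix (Fin n) (Fin n) ℝ ↦ f (p.1 ∘ σ))
        ({d | PosVec d} ×ˢ Set.univ) :=
    hf.comp (by fun_prop) fun _ hp i ↦ hp.1 (σ i)
  have hentry (i j : Fin n) : ContinuousOn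
      (fun p : (Fin n → ℝ) × Matrix (Fin n) (Fin n) ℝ ↦ p.2 i j) ({d | PosVec d} ×ˢ Set.univ) :=
    (continuous_snd.matrix_elem i j).continuousOn
  refine ((continuousOn_finsetSum _ fun i _ ↦ ?_).add
    (continuousOn_finsetSum _ fun i _ ↦ continuousOn_finsetSum _ fun j _ ↦ ?_)).add
    (continuousOn_finsetSum _ fun i _ ↦ continuousOn_finsetSum _ fun j _ ↦ ?_)
  · exact ((hcoeff hγ _).mul (hentry i i)).mul (hentry i i)
  · split_ifs
    · exact continuousOn_const
    · exact ((hcoeff hα _).mul (hentry i j)).mul (hentry i j)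
  · split_ifs
    · exact continuousOn_const
    · exact ((hcoeff hβ _).mul (hentry i i)).mul (hentry j j)

end InvariantMetric

open scoped Matrix.Norms.Frobenius in
theorem o_n_invariant_metric_continuity_general (n : ℕ) (hn : 2 ≤ n)
    (γ α β : (Fin n → ℝ) → ℝ)
    (hγc : ContinuousOn γ {d : Fin n → ℝ | PosVec d})
    (hαc : ContinuousOn α {d : Fin n → ℝ | PosVec d})
    (hβc : ContinuousOn β {d : Fin n → ℝ | PosVec d})
    (g : Matrix (Fin n) (Fin n) ℝ → Matrix (Fin n) (Fin n) ℝ → ℝ)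
    (hg : ∀ (P : Matrix (Fin n) (Fin n) ℝ) (d : Fin n → ℝ), P * Pᵀ = 1 → PosVec d →
      ∀ X : Matrix (Fin n) (Fin n) ℝ, X.IsSymm →
        g (P * Matrix.diagonal d * Pᵀ) X = gD hn γ α β d (Pᵀ * X * P) (Pᵀ * X * P))
    (ε : ℝ) (hε : 0 < ε) (Sig : Matrix (Fin n) (Fin n) ℝ) (hSig : Sig.PosDef) :
    ∃ η : ℝ, 0 < η ∧ ∀ Lam : Matrix (Fin n) (Fin n) ℝ, Lam.PosDef →
      frobNorm (Sig - Lam) ≤ η → ∀ X : Matrix (Fin n) (Fin n) ℝ, X.IsSymm →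
        |g Sig X - g Lam X| ≤ ε * frobNorm X ^ 2 := by
  have : ProperSpace (Matrix (Fin n) (Fin n) ℝ) := FiniteDimensional.proper_real _
  have hext : IsOrthogonalExtension {X | X.IsSymm} (fun d X ↦ gD hn γ α β d X X) g :=
    fun P hP d hd X hX ↦ hg P d ((mem_orthogonalGroup_iff _ _).1 hP) hd X hX
  have hsmul (c : ℝ) : ∀ X ∈ {X : Matrix (Fin n) (Fin n) ℝ | X.IsSymm}, c • X ∈ {X | X.IsSymm} :=
    fun _ hX ↦ IsSymm.smul hX c
  have hnear : ∀ᶠ Lam in 𝓝[{M | M.PosDef}] Sig, ∀ X ∈ {X | X.IsSymm},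
      |g Sig X - g Lam X| ≤ ε * ‖X‖ ^ 2 :=
    eventually_abs_sub_le_mul_norm_sq isClosed_setOf_isSymm hsmul
      (hext.continuousOn_uncurry (continuousOn_gD hn hγc hαc hβc))
      (fun _ hM c X hX ↦ hext.apply_smul (fun d X ↦ by rw [gD_smul_smul, sq]) hM hX
        (hsmul c X hX)) hSig hε
  obtain ⟨η, hη, hball⟩ :=
    (nhdsWithin_hasBasis Metric.nhds_basis_closedBall _).eventually_iff.1 hnear
  refine ⟨η, hη, fun Lam hLam hdist X hX ↦ ?_⟩
  rw [frobNorm_eq_norm, ← dist_eq_norm, dist_comm] at hdist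
  rw [frobNorm_eq_norm]
  exact hball ⟨hdist, hLam⟩ X hX

/-- If `α, β, γ` are continuous (on the positive orthant), then the
`O(n)`-invariant metric `g` they determine is continuous: for every `ε > 0` and `Σ ∈ SPD(n)`
there is `η > 0` such that `‖Σ − Λ‖_F ≤ η` implies
`|g_Σ(X,X) − g_Λ(X,X)| ≤ ε ‖X‖_F²` for all symmetric `X`. -/
theorem o_n_invariant_metric_continuity (n : ℕ) (hn : 2 ≤ n)
    (γ α β : (Fin n → ℝ) → ℝ)
    (hγpos : ∀ d, PosVec d → 0 < γ d) (hαpos : ∀ d, PosVec d → 0 < α d)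
    (hcompat : CompatCond hn γ α β) (hposS : PositivityCond hn γ β)
    (hγsym : Sym1n hn γ) (hαsym : Sym2n hn α) (hβsym : Sym2n hn β)
    (hγc : ContinuousOn γ {d : Fin n → ℝ | PosVec d})
    (hαc : ContinuousOn α {d : Fin n → ℝ | PosVec d})
    (hβc : ContinuousOn β {d : Fin n → ℝ | PosVec d})
    (g : Matrix (Fin n) (Fin n) ℝ → Matrix (Fin n) (Fin n) ℝ → ℝ)
    (hg : ∀ (P : Matrix (Fin n) (Fin n) ℝ) (d : Fin n → ℝ), P * Pᵀ = 1 → PosVec d →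
      ∀ X : Matrix (Fin n) (Fin n) ℝ, X.IsSymm →
        g (P * Matrix.diagonal d * Pᵀ) X = gD hn γ α β d (Pᵀ * X * P) (Pᵀ * X * P)) :
    ∀ ε : ℝ, 0 < ε → ∀ Sig : Matrix (Fin n) (Fin n) ℝ, Sig.PosDef →
      ∃ η : ℝ, 0 < η ∧ ∀ Lam : Matrix (Fin n) (Fin n) ℝ, Lam.PosDef →
        frobNorm (Sig - Lam) ≤ η → ∀ X : Matrix (Fin n) (Fin n) ℝ, X.IsSymm →
          |g Sig X - g Lam X| ≤ ε * frobNorm X ^ 2 := by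
  exact o_n_invariant_metric_continuity_general n hn γ α β hγc hαc hβc g hg
end
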